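/- Let A be a C*-algebra with an AF presentation (A_k), and let B be a C*-algebra with an AF presentation (B_k) that has the Fermion property. Then there exist a ℂ-linear isometry γ : A → B and a ℂ-linear map δ : B → A with ‖δ(b)‖ ≤ ‖b‖ for all b ∈ B such that δ ∘ γ = id_A; consequently γ ∘ δ is a contractive idempotent linear map of B whose range equals γ(A), so γ(A) is a contractively complemented closed subspace of B. -/

import Mathlib

/-!
Statement 0 (Lemma 1.1 of the paper, abstract form).

If `A` is a C*-algebra with an AF presentation and `B` is a C*-algebra with an
AF presentation having the Fermion property, then there is a ℂ-linear isometry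
`γ : A → B` and a contractive ℂ-linear map `δ : B → A` with `δ ∘ γ = id`, so
that `γ ∘ δ` is a contractive idempotent with range `γ(A)`.
-/

/-- `S` is an AF presentation of the C*-algebra `A`: an increasing sequence of
finite-dimensional *-subalgebras whose union is dense. -/
def IsAFPresentation (A : Type*) [NonUnitalCStarAlgebra A]
    (S : ℕ → NonUnitalStarSubalgebra ℂ A) : Prop :=
  Monotone S ∧ (∀ k, FiniteDimensional ℂ (S k)) ∧ Dense (⋃ k, (S k : Set A))

/-- The presentation `S` has the Fermion property: there are indices
`n 0 < n 1 < ⋯` and nonzero minimal central projections `p k` of `S (n k)` such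
that for every minimal projection `e` of the corner `p k • S (n k) • p k`,
the projection `p (k+1) * e` is nonzero and is not a minimal projection of
`S (n (k+1))`. -/
def HasFermionProperty (A : Type*) [NonUnitalCStarAlgebra A]
    (S : ℕ → NonUnitalStarSubalgebra ℂ A) : Prop :=
  ∃ (n : ℕ → ℕ) (p : ℕ → A),
    StrictMono n ∧
    (∀ k, p k ∈ S (n k)) ∧
    (∀ k, p k * p k = p k ∧ star (p k) = p k) ∧
    (∀ k, p k ≠ 0) ∧
    -- `p k` is central in `S (n k)`
    (∀ k, ∀ a ∈ S (n k), p k * a = a * p k) ∧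
    -- `p k` is minimal among the central projections of `S (n k)`
    (∀ k, ∀ q ∈ S (n k), (q * q = q ∧ star q = q) → (∀ a ∈ S (n k), q * a = a * q) →
      q * p k = q → q ≠ 0 → q = p k) ∧
    -- every minimal projection `e` of the corner `p k * S (n k) * p k` meets the
    -- next summand with multiplicity at least two
    (∀ k, ∀ e ∈ S (n k), (e * e = e ∧ star e = e) → e ≠ 0 → e * p k = e →
      (∀ a ∈ S (n k), ∃ c : ℂ, e * a * e = c • e) →
      (p (k + 1) * e ≠ 0 ∧
        ∃ q ∈ S (n (k + 1)), (q * q = q ∧ star q = q) ∧ q ≠ 0 ∧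
          q * (p (k + 1) * e) = q ∧ (p (k + 1) * e) * q = q ∧ q ≠ p (k + 1) * e))

/-!
The Fermion property yields minimal projections `f l` of the algebras `S l` with arbitrarily many
orthogonal copies of `f l'` under `f l` once `l'` is large. Suppose `A` is unital, with presentation
`C k`. Matrix units of `C k` are placed in some `S l` so that all their columns have source `f l`;
whatever the multiplicities of `C k ⊆ C (k + 1)`, there is room under `f l` to reproduce this
branching and to place matrix units of `C (k + 1)` in some later `S l'`. This gives embeddings
`φ k` of `C k` and left inverses `δ k`, the compressions. The `δ k` are compatible and have a
contractive common extension `δ`, but the `φ k` are not: `φ (k + 1)` restricts on `C k` to `φ k`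
cut down by a smaller projection. Hence a lift `γ` of `C k` is extended to `C (k + 1)` by
`φ (k + 1) + (γ - φ (k + 1)) ∘ r`, where `r` is a conditional expectation onto `C k`. The second
summand is orthogonal to the range of `φ (k + 1)`, so the norm of the sum is the maximum of the two
norms, and the extension is again contractive; being invisible to `δ`, the second summand does not
disturb `δ ∘ γ = id`. A general `A` is a contractive retract of the unitization of `A × A`,
through `a ↦ (a, -a)`.
-/

open scoped Matrix Kronecker Matrix.Norms.L2Operator

/-! ### Minimal projections of finite-dimensional *-subalgebras -/

theorem finite_spectrum_of_isIntegral {𝕜 A : Type*} [Field 𝕜] [Ring A] [Algebra 𝕜 A] {a : A}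
    (ha : IsIntegral 𝕜 a) : (spectrum 𝕜 a).Finite := by
  nontriviality A
  obtain ⟨P, hP, hPa⟩ := ha
  refine (P.rootSet_finite 𝕜).subset fun r hr => ?_
  have hroot := spectrum.subset_polynomial_aeval a P ⟨r, hr, rfl⟩
  rw [Polynomial.aeval_def, hPa, spectrum.zero_eq] at hroot
  exact Polynomial.mem_rootSet.mpr ⟨hP.ne_zero, by simpa [Polynomial.aeval_def] using hroot⟩

theorem finite_quasispectrum_of_mem {𝕜 A : Type*} [Field 𝕜] [NonUnitalRing A] [Module 𝕜 A]
    [IsScalarTower 𝕜 A A] [SMulCommClass 𝕜 A A] (S : NonUnitalSubalgebra 𝕜 A)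
    [FiniteDimensional 𝕜 S] {a : A} (ha : a ∈ S) : (quasispectrum 𝕜 a).Finite := by
  let incl : Unitization 𝕜 S →ₐ[𝕜] Unitization 𝕜 A := Unitization.lift
    ((Unitization.inrNonUnitalAlgHom 𝕜 A).comp (NonUnitalSubalgebraClass.subtype S))
  have : FiniteDimensional 𝕜 (Unitization 𝕜 S) :=
    Module.Finite.equiv (Unitization.linearEquiv 𝕜 𝕜 S).symm
  have hint : IsIntegral 𝕜 ((⟨a, ha⟩ : S) : Unitization 𝕜 S) := Algebra.IsIntegral.isIntegral _
  rw [Unitization.quasispectrum_eq_spectrum_inr 𝕜]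
  exact finite_spectrum_of_isIntegral (by simpa [incl] using hint.map incl)

section

variable {E : Type*} [NonUnitalCStarAlgebra E]

theorem exists_spectralProjection (S : NonUnitalStarSubalgebra ℂ E) [FiniteDimensional ℂ S]
    {h : E} [IsStarNormal h] (hS : h ∈ S) (h0 : h ≠ 0) :
    ∃ p ∈ S, IsStarProjection p ∧ p ≠ 0 ∧ ∃ r : ℂ, r ≠ 0 ∧ h * p = r • p := by
  have : FiniteDimensional ℂ S.toSubmodule := ‹FiniteDimensional ℂ S›
  have hclosed : IsClosed (S : Set E) := S.toSubmodule.closed_of_finiteDimensional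
  have hcont (f : ℂ → ℂ) : ContinuousOn f (quasispectrum ℂ h) :=
    (finite_quasispectrum_of_mem S.toNonUnitalSubalgebra hS).continuousOn f
  obtain ⟨r, hr, hr0⟩ : ∃ r ∈ quasispectrum ℂ h, r ≠ 0 := by
    by_contra! hzero
    apply h0
    rw [← cfcₙ_id ℂ h, ← cfcₙ_zero ℂ h]
    exact cfcₙ_congr fun x hx => by simp [hzero x hx]
  let f : ℂ → ℂ := Pi.single r 1
  have f0 : f 0 = 0 := by simp [f, hr0.symm]
  have hff : f * f = f := by simp [f, ← Pi.single_mul]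
  have hsf : star f = f := by simp [f]
  refine ⟨cfcₙ f h, cfcₙ_mem (𝕜' := ℂ) f hS, ⟨?_, ?_⟩, ?_, r, hr0, ?_⟩
  · rw [IsIdempotentElem, ← cfcₙ_mul f f h (hcont _) f0 (hcont _) f0]
    exact congrArg (cfcₙ · h) hff
  · rw [IsSelfAdjoint, ← cfcₙ_star]
    exact congrArg (cfcₙ · h) hsf
  · intro hz
    have hspec := cfcₙ_map_quasispectrum f h (hcont _) f0
    rw [hz, Unitization.quasispectrum_eq_spectrum_inr ℂ, Unitization.inr_zero,
      spectrum.zero_eq] at hspec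
    have : f r ∈ ({0} : Set ℂ) := hspec ▸ ⟨r, hr, rfl⟩
    simp [f] at this
  · nth_rewrite 1 [← cfcₙ_id ℂ h]
    rw [← cfcₙ_mul id f h (hcont _) rfl (hcont _) f0, ← cfcₙ_smul r f h (hcont _) f0]
    refine cfcₙ_congr fun x _ => ?_
    by_cases hx : x = r <;> simp [f, hx]

/-- `e` is a minimal projection of the *-subalgebra `S`, expressed by the corner `e S e` consisting
of the scalar multiples of `e`. -/
structure IsMinimalProjection (S : NonUnitalStarSubalgebra ℂ E) (e : E) : Prop where
  mem : e ∈ S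
  isStarProjection : IsStarProjection e
  ne_zero : e ≠ 0
  exists_smul_eq : ∀ a ∈ S, ∃ c : ℂ, e * a * e = c • e

theorem isMinimalProjection_of_forall_le {S : NonUnitalStarSubalgebra ℂ E} [FiniteDimensional ℂ S]
    {e : E} (he : e ∈ S) (hproj : IsStarProjection e) (he0 : e ≠ 0)
    (hmin : ∀ p ∈ S, IsStarProjection p → p ≠ 0 → e * p = p → p = e) :
    IsMinimalProjection S e := by
  have hee : e * e = e := hproj.isIdempotentElem
  have hse : star e = e := hproj.isSelfAdjoint
  have key : ∀ h ∈ S, IsSelfAdjoint h → ∃ c : ℂ, e * h * e = c • e := by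
    intro h hh hsa
    have hsa' : IsSelfAdjoint (e * h * e) := by
      simpa [hse] using hsa.conjugate e
    have := hsa'.isStarNormal
    rcases eq_or_ne (e * h * e) 0 with hz | hz
    · exact ⟨0, by simp [hz]⟩
    obtain ⟨p, hpS, hp, hp0, r, hr, hpr⟩ :=
      exists_spectralProjection S (mul_mem (mul_mem he hh) he) hz
    have hep : e * p = p := by
      rw [← smul_right_inj hr, ← mul_smul_comm, ← hpr, ← mul_assoc, ← mul_assoc, ← mul_assoc, hee]
    obtain rfl := hmin p hpS hp hp0 hep
    exact ⟨r, by rwa [mul_assoc _ p p, hee] at hpr⟩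
  refine ⟨he, hproj, he0, fun a ha => ?_⟩
  have hsa : star a ∈ S := star_mem ha
  obtain ⟨c, hc⟩ := key (realPart a)
    (by rw [realPart_apply_coe, ← Complex.coe_smul]; exact S.smul_mem _ (add_mem ha hsa))
    (realPart a).2
  obtain ⟨d, hd⟩ := key (imaginaryPart a)
    (by rw [imaginaryPart_apply_coe, ← Complex.coe_smul]
        exact S.smul_mem _ (S.smul_mem _ (sub_mem ha hsa)))
    (imaginaryPart a).2
  refine ⟨c + Complex.I * d, ?_⟩
  rw [← realPart_add_I_smul_imaginaryPart a, mul_add, add_mul, hc, mul_smul_comm, smul_mul_assoc,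
    hd, smul_smul, add_smul]

theorem exists_isMinimalProjection_le (S : NonUnitalStarSubalgebra ℂ E) [FiniteDimensional ℂ S]
    {q : E} (hq : q ∈ S) (hqp : IsStarProjection q) (hq0 : q ≠ 0) :
    ∃ e, IsMinimalProjection S e ∧ q * e = e := by
  have hfd : FiniteDimensional ℂ S.toSubmodule := ‹FiniteDimensional ℂ S›
  let rightIdeal (p : E) : Submodule ℂ E := S.toSubmodule.map (LinearMap.mulLeft ℂ p)
  obtain ⟨e, ⟨heS, he, he0, hqe⟩, hmin⟩ :=
    (measure fun p => Module.finrank ℂ (rightIdeal p)).wf.has_min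
      {p | p ∈ S ∧ IsStarProjection p ∧ p ≠ 0 ∧ q * p = p}
      ⟨q, hq, hqp, hq0, hqp.isIdempotentElem⟩
  refine ⟨e, isMinimalProjection_of_forall_le heS he he0 fun p hpS hp hp0 hep => ?_, hqe⟩
  by_contra hne
  refine hmin p ⟨hpS, hp, hp0, by rw [← hep, ← mul_assoc, hqe]⟩
    (Submodule.finrank_lt_finrank_of_lt ?_)
  have hle : rightIdeal p ≤ rightIdeal e := by
    rintro _ ⟨a, ha, rfl⟩
    exact ⟨p * a, S.mul_mem hpS ha, by simp [← mul_assoc, hep]⟩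
  refine lt_of_le_of_ne hle fun heq => hne ?_
  obtain ⟨a, -, ha⟩ : e ∈ rightIdeal p := heq ▸ ⟨e, heS, he.isIdempotentElem⟩
  have hpe : p * e = e := by
    rw [← ha]; simp [← mul_assoc, hp.isIdempotentElem.eq]
  simpa [he.isSelfAdjoint.star_eq, hp.isSelfAdjoint.star_eq, hep] using congrArg star hpe

namespace IsMinimalProjection

variable {S : NonUnitalStarSubalgebra ℂ E} {e : E}

theorem mul_self (he : IsMinimalProjection S e) : e * e = e :=
  he.isStarProjection.isIdempotentElem

theorem star_eq (he : IsMinimalProjection S e) : star e = e :=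
  he.isStarProjection.isSelfAdjoint

/-- The functional on the ambient algebra which reads off the scalar of an element of the corner
`e E e` that is a multiple of the minimal projection `e`. -/
noncomputable def coeff (he : IsMinimalProjection S e) : E →ₗ[ℂ] ℂ :=
  (SeparatingDual.exists_eq_one (R := ℂ) he.ne_zero).choose.toLinearMap ∘ₗ
    LinearMap.mulLeftRight ℂ (e, e)

theorem coeff_eq_of_mul_mul_eq_smul (he : IsMinimalProjection S e) {x : E} {c : ℂ}
    (h : e * x * e = c • e) : he.coeff x = c := by
  simp [coeff, h, (SeparatingDual.exists_eq_one (R := ℂ) he.ne_zero).choose_spec]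

theorem coeff_smul_eq (he : IsMinimalProjection S e) {a : E} (ha : a ∈ S) :
    he.coeff a • e = e * a * e := by
  obtain ⟨c, hc⟩ := he.exists_smul_eq a ha
  rw [he.coeff_eq_of_mul_mul_eq_smul hc, hc]

theorem exists_star_mul_self_eq (he : IsMinimalProjection S e) {x : E} (hx : x ∈ S)
    (hxe : x * e ≠ 0) : ∃ c : ℂ, star (c • (x * e)) * (c • (x * e)) = e := by
  let _ := CStarAlgebra.spectralOrder E
  have := CStarAlgebra.spectralOrderedRing E
  obtain ⟨c, hc⟩ := he.exists_smul_eq (star x * x) (mul_mem (star_mem hx) hx)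
  have hsq : star (x * e) * (x * e) = c • e := by
    rw [← hc, star_mul, he.star_eq]; simp only [mul_assoc]
  have hc_real : (c.re : ℂ) = c := by
    have hstar := congrArg star hsq
    rw [star_star_mul, hsq, star_smul, he.star_eq] at hstar
    exact Complex.conj_eq_iff_re.mp (smul_left_injective ℂ he.ne_zero hstar.symm)
  have he_pos : 0 < e := he.isStarProjection.nonneg.lt_of_ne he.ne_zero.symm
  have hc_pos : 0 < c.re := by
    refine (smul_pos_iff_of_pos_right he_pos).mp ?_
    rw [← Complex.coe_smul, hc_real, ← hsq]
    exact (star_mul_self_nonneg _).lt_of_ne (CStarRing.star_mul_self_ne_zero_iff _ |>.mpr hxe).symm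
  refine ⟨((√c.re)⁻¹ : ℝ), ?_⟩
  rw [star_smul, smul_mul_smul_comm, hsq, smul_smul, ← hc_real, Complex.star_def,
    Complex.conj_ofReal, Complex.ofReal_re, ← Complex.ofReal_mul, ← Complex.ofReal_mul,
    ← mul_inv, Real.mul_self_sqrt hc_pos.le, inv_mul_cancel₀ hc_pos.ne', Complex.ofReal_one,
    one_smul]

end IsMinimalProjection

theorem mul_eq_self_of_star_mul_self {w p : E} (hp : IsStarProjection p) (h : star w * w = p) :
    w * p = w := by
  rw [← sub_eq_zero, ← CStarRing.star_mul_self_eq_zero_iff]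
  simp only [star_sub, star_mul, hp.isSelfAdjoint.star_eq, sub_mul, mul_sub, mul_assoc]
  simp only [← mul_assoc, h, hp.isIdempotentElem.eq, sub_self]

/-! ### Orthogonal families of partial isometries -/

/-- A family of elements of `S` with prescribed sources `star (w t) * w t = g t` and mutually
orthogonal ranges; when the `g t` are projections, it consists of partial isometries. -/
structure IsOrthogonalFamily {T : Type*} (S : NonUnitalStarSubalgebra ℂ E) (g w : T → E) :
    Prop where
  mem : ∀ t, w t ∈ S
  star_mul_self : ∀ t, star (w t) * w t = g t
  pairwise : Pairwise fun s t => star (w s) * w t = 0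

namespace IsOrthogonalFamily

variable {S : NonUnitalStarSubalgebra ℂ E} {T : Type*} {g w : T → E}

theorem mono {S' : NonUnitalStarSubalgebra ℂ E} (hw : IsOrthogonalFamily S g w) (h : S ≤ S') :
    IsOrthogonalFamily S' g w :=
  ⟨fun t => h (hw.mem t), hw.star_mul_self, hw.pairwise⟩

theorem comp_injective {U : Type*} (hw : IsOrthogonalFamily S g w) {f : U → T}
    (hf : Function.Injective f) : IsOrthogonalFamily S (g ∘ f) (w ∘ f) :=
  ⟨fun u => hw.mem (f u), fun u => hw.star_mul_self (f u), fun _ _ hne => hw.pairwise (hf.ne hne)⟩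

theorem mul_sigma {U : T → Type*} {h z : (Σ t, U t) → E} (hw : IsOrthogonalFamily S g w)
    (hz : ∀ t, IsOrthogonalFamily S (fun u => h ⟨t, u⟩) fun u => z ⟨t, u⟩)
    (hgz : ∀ x, g x.1 * z x = z x) : IsOrthogonalFamily S h fun x => w x.1 * z x := by
  have hprod (x y : Σ t, U t) :
      star (w x.1 * z x) * (w y.1 * z y) = star (z x) * (star (w x.1) * w y.1) * z y := by
    rw [star_mul]; simp only [mul_assoc]
  refine ⟨fun x => mul_mem (hw.mem x.1) ((hz x.1).mem x.2), fun x => ?_, ?_⟩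
  · rw [hprod, hw.star_mul_self, mul_assoc, hgz]
    exact (hz x.1).star_mul_self x.2
  · rintro ⟨s, u⟩ ⟨t, v⟩ hne
    change star (w s * z ⟨s, u⟩) * (w t * z ⟨t, v⟩) = 0
    rw [hprod ⟨s, u⟩ ⟨t, v⟩]
    by_cases hst : s = t
    · subst hst
      rw [hw.star_mul_self, mul_assoc, hgz ⟨s, v⟩]
      exact (hz s).pairwise fun huv => hne (by rw [huv])
    · rw [hw.pairwise hst, mul_zero, zero_mul]

theorem star_mul_eq [DecidableEq T] (hw : IsOrthogonalFamily S g w) (s t : T) :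
    star (w s) * w t = if s = t then g s else 0 := by
  split_ifs with h
  · rw [← h, hw.star_mul_self]
  · exact hw.pairwise h

theorem mul_source (hw : IsOrthogonalFamily S g w) {t : T} (hg : IsStarProjection (g t)) :
    w t * g t = w t :=
  mul_eq_self_of_star_mul_self hg (hw.star_mul_self t)

theorem star_mul_sum [Fintype T] (hw : IsOrthogonalFamily S g w)
    (hg : ∀ t, IsStarProjection (g t)) (t : T) :
    star (w t) * ∑ s, w s * star (w s) = star (w t) := by
  classical
  have hstar := congrArg star (hw.mul_source (hg t))
  rw [star_mul, (hg t).isSelfAdjoint.star_eq] at hstar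
  simp [Finset.mul_sum, ← mul_assoc, hw.star_mul_eq, ite_mul, hstar]

theorem isStarProjection_sum [Fintype T] (hw : IsOrthogonalFamily S g w)
    (hg : ∀ t, IsStarProjection (g t)) : IsStarProjection (∑ t, w t * star (w t)) where
  isIdempotentElem := by
    rw [IsIdempotentElem, Finset.sum_mul]
    simp only [mul_assoc, hw.star_mul_sum hg]
  isSelfAdjoint := by simp [IsSelfAdjoint, star_sum]

theorem sum_mem [Fintype T] (hw : IsOrthogonalFamily S g w) : ∑ t, w t * star (w t) ∈ S :=
  _root_.sum_mem fun t _ => mul_mem (hw.mem t) (star_mem (hw.mem t))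

end IsOrthogonalFamily

theorem mul_sum_mul_star_eq_self {T : Type*} [Fintype T] {q : E} {w : T → E}
    (h : ∀ t, q * w t = w t) : q * ∑ t, w t * star (w t) = ∑ t, w t * star (w t) := by
  simp only [Finset.mul_sum, ← mul_assoc, h]

theorem card_le_finrank_of_pairwise_star_mul_eq_zero (V : Submodule ℂ E) [FiniteDimensional ℂ V]
    {X : Finset E} (hX : ∀ x ∈ X, x ∈ V ∧ x ≠ 0)
    (horth : (X : Set E).Pairwise fun x y => star x * y = 0) :
    X.card ≤ Module.finrank ℂ V := by
  let v (x : X) : V := ⟨x, (hX x x.2).1⟩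
  have hv : LinearIndependent ℂ v := by
    refine linearIndependent_iff'.mpr fun s c hc y hy => ?_
    have hsum : ∑ x ∈ s, c x • (x : E) = 0 := by
      simpa [v] using congrArg V.subtype hc
    have hy' : c y • (star (y : E) * (y : E)) = 0 := by
      rw [← mul_smul_comm, ← mul_zero (star (y : E)), ← hsum, Finset.mul_sum]
      refine (Finset.sum_eq_single_of_mem (f := fun x => star (y : E) * c x • (x : E)) y hy
        fun x _ hxy => ?_).symm
      rw [mul_smul_comm, horth y.2 x.2 (Subtype.coe_ne_coe.mpr hxy.symm), smul_zero]
    exact (smul_eq_zero.mp hy').resolve_right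
      ((CStarRing.star_mul_self_ne_zero_iff _).mpr (hX y y.2).2)
  simpa using hv.fintype_card_le_finrank

theorem exists_maximal_pairwise (V : Submodule ℂ E) [FiniteDimensional ℂ V] {P : E → Prop}
    {r : E → E → Prop} (hr : ∀ x y, P x → P y → r x y → r y x)
    (hP : ∀ x, P x → x ∈ V ∧ x ≠ 0) (hrP : ∀ x y, P x → P y → r x y → star x * y = 0) :
    ∃ X : Finset E, (∀ x ∈ X, P x) ∧ (X : Set E).Pairwise r ∧ ∀ y, P y → ∃ x ∈ X, ¬ r x y := by
  classical
  let families : Set (Finset E) := {X | (∀ x ∈ X, P x) ∧ (X : Set E).Pairwise r}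
  have hbdd : BddAbove (Finset.card '' families) := by
    refine ⟨Module.finrank ℂ V, ?_⟩
    rintro _ ⟨X, ⟨hXP, hXr⟩, rfl⟩
    exact card_le_finrank_of_pairwise_star_mul_eq_zero V (fun x hx => hP x (hXP x hx))
      fun x hx y hy hne => hrP x y (hXP x hx) (hXP y hy) (hXr hx hy hne)
  obtain ⟨X, ⟨hXP, hXr⟩, hcard⟩ := Nat.sSup_mem (Set.Nonempty.image _ ⟨∅, by simp [families]⟩) hbdd
  refine ⟨X, hXP, hXr, fun y hy => ?_⟩
  by_contra! hyX
  have hynot : y ∉ X := fun hmem =>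
    (hP y hy).2 ((CStarRing.star_mul_self_eq_zero_iff y).mp (hrP y y hy hy (hyX y hmem)))
  have hins : insert y X ∈ families := by
    refine ⟨by simpa using ⟨hy, hXP⟩, ?_⟩
    rw [Finset.coe_insert]
    exact hXr.insert fun x hx _ => ⟨hr _ _ (hXP x hx) hy (hyX x hx), hyX x hx⟩
  have hle := le_csSup hbdd ⟨_, hins, rfl⟩
  rw [← hcard, Finset.card_insert_of_notMem hynot] at hle
  exact (Nat.lt_succ_self _).not_ge hle

section Exhaustion

variable (S : NonUnitalStarSubalgebra ℂ E) [FiniteDimensional ℂ S]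

theorem exists_exhausting_orthogonalFamily {R : Set E} (hR : ∀ e ∈ R, IsMinimalProjection S e)
    {q : E} (hqS : q ∈ S) (hq : IsStarProjection q) :
    ∃ X : Finset E, IsOrthogonalFamily S (fun x : X => star (x : E) * x) (fun x : X => (x : E)) ∧
      (∀ x ∈ X, q * x = x ∧ star x * x ∈ R) ∧
      ∀ a ∈ S, ∀ e ∈ R, (q - ∑ x : X, (x : E) * star (x : E)) * a * e = 0 := by
  have hfd : FiniteDimensional ℂ S.toSubmodule := ‹FiniteDimensional ℂ S›
  obtain ⟨X, hXP, hXr, hmax⟩ := exists_maximal_pairwise S.toSubmodule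
    (P := fun x => x ∈ S ∧ q * x = x ∧ star x * x ∈ R) (r := fun x y => star x * y = 0)
    (fun x y _ _ hxy => by simpa using congrArg star hxy)
    (fun x hx => ⟨hx.1, fun h0 => (hR _ hx.2.2).ne_zero (by simp [h0])⟩) (fun _ _ _ _ h => h)
  have hX : IsOrthogonalFamily S (fun x : X => star (x : E) * x) (fun x : X => (x : E)) :=
    ⟨fun x => (hXP x x.2).1, fun _ => rfl,
      fun x y hne => hXr x.2 y.2 (Subtype.coe_ne_coe.mpr hne)⟩
  refine ⟨X, hX, fun x hx => (hXP x hx).2, fun a ha e he => ?_⟩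
  set s := ∑ x : X, (x : E) * star (x : E)
  have hqs : q * s = s := mul_sum_mul_star_eq_self fun x : X => (hXP x x.2).2.1
  have horth (x : X) : star (x : E) * (q - s) = 0 := by
    have hxq : star (x : E) * q = star (x : E) := by
      simpa [hq.isSelfAdjoint.star_eq] using congrArg star (hXP x x.2).2.1
    rw [mul_sub, hxq, hX.star_mul_sum fun y => (hR _ (hXP y y.2).2.2).isStarProjection, sub_self]
  have hmem : (q - s) * a ∈ S := mul_mem (sub_mem hqS hX.sum_mem) ha
  by_contra hne
  obtain ⟨c, hc⟩ := (hR e he).exists_star_mul_self_eq hmem hne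
  obtain ⟨x, hx, hxy⟩ := hmax (c • ((q - s) * a * e))
    ⟨S.smul_mem _ (S.mul_mem hmem (hR e he).mem),
      by rw [mul_smul_comm, ← mul_assoc, ← mul_assoc, mul_sub, hq.isIdempotentElem.eq, hqs],
      hc.symm ▸ he⟩
  apply hxy
  rw [mul_smul_comm, ← mul_assoc, ← mul_assoc, horth ⟨x, hx⟩, zero_mul, zero_mul, smul_zero]

theorem exists_disjoint_minimalProjections :
    ∃ R : Finset E, (∀ e ∈ R, IsMinimalProjection S e) ∧
      (R : Set E).Pairwise (fun e e' => ∀ a ∈ S, e * a * e' = 0) ∧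
      ∀ e, IsMinimalProjection S e → ∃ e' ∈ R, ∃ a ∈ S, e' * a * e ≠ 0 := by
  have hfd : FiniteDimensional ℂ S.toSubmodule := ‹FiniteDimensional ℂ S›
  obtain ⟨R, hR, hRr, hmax⟩ := exists_maximal_pairwise S.toSubmodule
    (P := IsMinimalProjection S) (r := fun e e' => ∀ a ∈ S, e * a * e' = 0)
    (fun e e' he he' h a ha => by
      simpa [he.star_eq, he'.star_eq, mul_assoc] using congrArg star (h _ (star_mem ha)))
    (fun e he => ⟨he.mem, he.ne_zero⟩)
    (fun e e' he _ h => by simpa [he.star_eq, he.mul_self] using h e he.mem)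
  exact ⟨R, hR, hRr, fun e he => by simpa using hmax e he⟩

variable {S}

theorem exists_orthogonalFamily_sum_eq {R : Set E} (hR : ∀ e ∈ R, IsMinimalProjection S e)
    (hfull : ∀ e, IsMinimalProjection S e → ∃ e' ∈ R, ∃ a ∈ S, e' * a * e ≠ 0)
    {q : E} (hqS : q ∈ S) (hq : IsStarProjection q) :
    ∃ X : Finset E, IsOrthogonalFamily S (fun x : X => star (x : E) * x) (fun x : X => (x : E)) ∧
      (∀ x ∈ X, q * x = x ∧ star x * x ∈ R) ∧ ∑ x : X, (x : E) * star (x : E) = q := by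
  obtain ⟨X, hX, hXR, hrem⟩ := exists_exhausting_orthogonalFamily S hR hqS hq
  refine ⟨X, hX, hXR, ?_⟩
  set s := ∑ x : X, (x : E) * star (x : E)
  have hs : IsStarProjection s :=
    hX.isStarProjection_sum fun x => (hR _ (hXR x x.2).2).isStarProjection
  have hqs : q * s = s := mul_sum_mul_star_eq_self fun x : X => (hXR x x.2).1
  have hz : IsStarProjection (q - s) := hs.sub_of_mul_eq_right hq hqs
  by_contra hne
  obtain ⟨e, he, hze⟩ := exists_isMinimalProjection_le S (sub_mem hqS hX.sum_mem) hz
    (sub_ne_zero.mpr (Ne.symm hne))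
  obtain ⟨e', he', a, ha, hae⟩ := hfull e he
  apply hae
  have := hrem (e * star a) (mul_mem he.mem (star_mem ha)) e' he'
  rw [← mul_assoc, hze] at this
  simpa [he.star_eq, (hR e' he').star_eq, mul_assoc] using congrArg star this

end Exhaustion

/-! ### Doubling sequences from the Fermion property -/

/-- `p` is minimal among the nonzero central projections of `S`, that is, the unit of a simple
summand of `S` when `S` is finite-dimensional. -/
structure IsMinimalCentralProjection (S : NonUnitalStarSubalgebra ℂ E) (p : E) : Prop where
  mem : p ∈ S
  isStarProjection : IsStarProjection p
  ne_zero : p ≠ 0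
  commute : ∀ a ∈ S, Commute p a
  eq_of_mul_eq : ∀ q ∈ S, IsStarProjection q → (∀ a ∈ S, Commute q a) → q * p = q → q ≠ 0 → q = p

theorem commute_of_forall_mul_eq {S : NonUnitalStarSubalgebra ℂ E} {z : E} (hz : IsSelfAdjoint z)
    (h : ∀ a ∈ S, z * a * z = a * z) : ∀ a ∈ S, Commute z a := fun a ha => by
  have hstar := congrArg star (h (star a) (star_mem ha))
  simp only [star_mul, star_star, hz.star_eq, ← mul_assoc] at hstar
  exact hstar.symm.trans (h a ha)

theorem IsMinimalCentralProjection.exists_sum_eq {S : NonUnitalStarSubalgebra ℂ E}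
    [FiniteDimensional ℂ S] {p e : E} (hp : IsMinimalCentralProjection S p)
    (he : IsMinimalProjection S e) (hpe : p * e = e) :
    ∃ X : Finset E, IsOrthogonalFamily S (fun _ : X => e) (fun x : X => (x : E)) ∧
      ∑ x : X, (x : E) * star (x : E) = p := by
  obtain ⟨X, hX, hXe, hrem⟩ := exists_exhausting_orthogonalFamily S (R := {e})
    (fun e' he' => he' ▸ he) hp.mem hp.isStarProjection
  have hX' : IsOrthogonalFamily S (fun _ : X => e) (fun x : X => (x : E)) :=
    ⟨hX.mem, fun x => (hXe x x.2).2, hX.pairwise⟩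
  refine ⟨X, hX', ?_⟩
  set z := ∑ x : X, (x : E) * star (x : E)
  have hz : IsStarProjection z := hX'.isStarProjection_sum fun _ => he.isStarProjection
  have hpz : p * z = z := mul_sum_mul_star_eq_self fun x : X => (hXe x x.2).1
  have hzax (a : E) (ha : a ∈ S) (x : X) : z * (a * x) = a * x := by
    have hx := hrem (a * x) (mul_mem ha (hX.mem x)) e rfl
    rw [mul_assoc, mul_assoc, hX'.mul_source he.isStarProjection, sub_mul, sub_eq_zero] at hx
    rw [← hx, ← mul_assoc, (hp.commute a ha).eq, mul_assoc, (hXe x x.2).1]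
  refine hp.eq_of_mul_eq z hX.sum_mem hz (commute_of_forall_mul_eq hz.isSelfAdjoint ?_)
    ((hp.commute z hX.sum_mem).symm.eq.trans hpz) ?_
  · intro a ha
    have haz : a * z = ∑ x : X, a * x * star (x : E) := by
      simp only [z, Finset.mul_sum, mul_assoc]
    rw [mul_assoc, haz, Finset.mul_sum]
    exact Finset.sum_congr rfl fun x _ => by rw [← mul_assoc, hzax a ha]
  · intro h0
    have := hrem e he.mem e rfl
    rw [h0, sub_zero, hpe, he.mul_self] at this
    exact he.ne_zero this

theorem IsMinimalCentralProjection.exists_isMinimalProjection {S : NonUnitalStarSubalgebra ℂ E}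
    [FiniteDimensional ℂ S] {p : E} (hp : IsMinimalCentralProjection S p) :
    ∃ e, IsMinimalProjection S e ∧ p * e = e ∧ ∀ r ∈ S, r ≠ 0 → IsStarProjection r → p * r = r →
      ∃ w ∈ S, r * w = w ∧ star w * w = e := by
  obtain ⟨e, he, hpe⟩ := exists_isMinimalProjection_le S hp.mem hp.isStarProjection hp.ne_zero
  obtain ⟨X, hX, hsum⟩ := hp.exists_sum_eq he hpe
  refine ⟨e, he, hpe, fun r hr hr0 hrp hpr => ?_⟩
  obtain ⟨x, hx⟩ : ∃ x : X, r * x ≠ 0 := by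
    by_contra! hzero
    apply hr0
    rw [← hpr, (hp.commute r hr).eq, ← hsum, Finset.mul_sum]
    exact Finset.sum_eq_zero fun x _ => by rw [← mul_assoc, hzero, zero_mul]
  have hrx : r * x * e = r * x := by rw [mul_assoc, hX.mul_source he.isStarProjection]
  obtain ⟨c, hc⟩ := he.exists_star_mul_self_eq (mul_mem hr (hX.mem x)) (hrx.symm ▸ hx)
  refine ⟨c • (r * x * e), S.smul_mem _ (S.mul_mem (mul_mem hr (hX.mem x)) he.mem), ?_, hc⟩
  rw [hrx, mul_smul_comm, ← mul_assoc, hrp.isIdempotentElem.eq]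

/-- Minimal projections `f l` of `S l` such that two orthogonal copies of `f (l + 1)` in `S (l + 1)`
lie under `f l`; this is the form in which the Fermion property enters. -/
structure IsDoublingSequence (S : ℕ → NonUnitalStarSubalgebra ℂ E) (f : ℕ → E) : Prop where
  isMinimal : ∀ l, IsMinimalProjection (S l) (f l)
  exists_pair : ∀ l, ∃ w : Bool → E,
    IsOrthogonalFamily (S (l + 1)) (fun _ => f (l + 1)) w ∧ ∀ b, f l * w b = w b

theorem exists_orthogonal_pair {S : NonUnitalStarSubalgebra ℂ E} {f g h q : E}
    (hsub : ∀ r ∈ S, r ≠ 0 → IsStarProjection r → h * r = r → ∃ w ∈ S, r * w = w ∧ star w * w = g)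
    (hhS : h ∈ S) (hh : IsStarProjection h) (hfh : f * h = h) (hqS : q ∈ S)
    (hq : IsStarProjection q) (hq0 : q ≠ 0) (hhq : h * q = q) (hne : q ≠ h) :
    ∃ w : Bool → E, IsOrthogonalFamily S (fun _ => g) w ∧ ∀ b, f * w b = w b := by
  have hproj : IsStarProjection (h - q) := hq.sub_of_mul_eq_right hh hhq
  obtain ⟨w, hw, hqw, hwg⟩ := hsub q hqS hq0 hq hhq
  obtain ⟨w', hw', hqw', hwg'⟩ := hsub (h - q) (sub_mem hhS hqS) (sub_ne_zero.mpr hne.symm) hproj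
    (by rw [mul_sub, hh.isIdempotentElem.eq, hhq])
  have horth : star w * w' = 0 := by
    have hqh : q * h = q := by
      simpa [hq.isSelfAdjoint.star_eq, hh.isSelfAdjoint.star_eq] using congrArg star hhq
    rw [← hqw, ← hqw', star_mul, hq.isSelfAdjoint.star_eq, mul_assoc, ← mul_assoc q, mul_sub, hqh,
      hq.isIdempotentElem.eq, sub_self, zero_mul, mul_zero]
  refine ⟨fun b => cond b w w', ⟨?_, ?_, ?_⟩, ?_⟩
  · rintro (_ | _) <;> assumption
  · rintro (_ | _) <;> assumption
  · have horth' : star w' * w = 0 := by simpa using congrArg star horth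
    rintro (_ | _) (_ | _) hbc <;> first | exact (hbc rfl).elim | assumption
  · have hfq : f * q = q := by rw [← hhq, ← mul_assoc, hfh]
    rintro (_ | _)
    · change f * w' = w'
      rw [← hqw', ← mul_assoc, mul_sub, hfh, hfq]
    · change f * w = w
      rw [← hqw, ← mul_assoc, hfq]

theorem HasFermionProperty.exists_isDoublingSequence {S : ℕ → NonUnitalStarSubalgebra ℂ E}
    (hS : IsAFPresentation E S) (hF : HasFermionProperty E S) :
    ∃ (n : ℕ → ℕ) (f : ℕ → E), StrictMono n ∧ IsDoublingSequence (S ∘ n) f := by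
  obtain ⟨hmono, hfd, -⟩ := hS
  obtain ⟨n, p, hn, hpS, hp, hp0, hpc, hpm, hmult⟩ := hF
  have hcentral (l : ℕ) : IsMinimalCentralProjection (S (n l)) (p l) :=
    ⟨hpS l, ⟨(hp l).1, (hp l).2⟩, hp0 l, hpc l,
      fun q hq hqp => hpm l q hq ⟨hqp.isIdempotentElem, hqp.isSelfAdjoint⟩⟩
  choose f hf hpf hsub using fun l => (hcentral l).exists_isMinimalProjection
  refine ⟨n, f, hn, hf, fun l => ?_⟩
  have hfS : f l ∈ S (n (l + 1)) := hmono (hn l.lt_succ_self).le (hf l).mem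
  have hcomm := (hcentral (l + 1)).commute (f l) hfS
  obtain ⟨-, q, hqS, hq, hq0, -, hhq, hne⟩ := hmult l (f l) (hf l).mem
    ⟨(hf l).mul_self, (hf l).star_eq⟩ (hf l).ne_zero
    ((hpc l _ (hf l).mem).symm.trans (hpf l)) (hf l).exists_smul_eq
  have hpp : p (l + 1) * p (l + 1) = p (l + 1) := (hp (l + 1)).1
  refine exists_orthogonal_pair (h := p (l + 1) * f l) (fun r hr hr0 hrp hhr => ?_)
    (mul_mem (hpS _) hfS) ((hcentral _).isStarProjection.mul (hf l).isStarProjection hcomm) ?_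
    hqS ⟨hq.1, hq.2⟩ hq0 hhq hne
  · refine hsub (l + 1) r hr hr0 hrp ?_
    rw [← hhr, ← mul_assoc, ← mul_assoc, hpp]
  · rw [hcomm.eq, ← mul_assoc, (hf l).mul_self]

namespace IsDoublingSequence

variable {S : ℕ → NonUnitalStarSubalgebra ℂ E} {f : ℕ → E}

theorem exists_binary_family (hf : IsDoublingSequence S f) (hS : Monotone S) (l n : ℕ) :
    ∃ w : (Fin n → Bool) → E, IsOrthogonalFamily (S (l + n)) (fun _ => f (l + n)) w ∧
      ∀ t, f l * w t = w t := by
  induction n with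
  | zero =>
    have hmin := hf.isMinimal l
    exact ⟨fun _ => f l, ⟨fun _ => hmin.mem, fun _ => by rw [hmin.star_eq, hmin.mul_self]; rfl,
      fun s t hne => (hne (Subsingleton.elim s t)).elim⟩, fun _ => hmin.mul_self⟩
  | succ n ih =>
    obtain ⟨w, hw, hfw⟩ := ih
    obtain ⟨z, hz, hfz⟩ := hf.exists_pair (l + n)
    have hcomp := (hw.mono (hS (Nat.le_succ _))).mul_sigma (U := fun _ => Bool)
      (h := fun _ => f (l + n + 1)) (z := fun x => z x.2) (fun _ => hz) fun x => hfz x.2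
    let split (t : Fin (n + 1) → Bool) : Σ _ : Fin n → Bool, Bool := ⟨Fin.init t, t (Fin.last n)⟩
    have hsplit : Function.Injective split := fun s t hst => by
      simp only [split, Sigma.mk.injEq, heq_eq_eq] at hst
      rw [← Fin.snoc_init_self s, ← Fin.snoc_init_self t, hst.1, hst.2]
    exact ⟨_, hcomp.comp_injective hsplit, fun t => by
      simp only [Function.comp_apply, ← mul_assoc, hfw]⟩

theorem exists_family (hf : IsDoublingSequence S f) (hS : Monotone S) (T : Type*) [Finite T]
    (l : ℕ) : ∃ l' > l, ∃ w : T → E,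
      IsOrthogonalFamily (S l') (fun _ => f l') w ∧ ∀ t, f l * w t = w t := by
  have := Fintype.ofFinite T
  obtain ⟨w, hw, hfw⟩ := hf.exists_binary_family hS l (Fintype.card T + 1)
  obtain ⟨ι⟩ : Nonempty (T ↪ (Fin (Fintype.card T + 1) → Bool)) := by
    refine Function.Embedding.nonempty_of_card_le ?_
    simpa using (Nat.lt_two_pow_self.trans (Nat.pow_lt_pow_succ one_lt_two)).le
  exact ⟨_, by omega, w ∘ ι, hw.comp_injective ι.injective, fun t => hfw (ι t)⟩

end IsDoublingSequence

/-! ### Matrix systems -/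

/-- Finite direct sums of full matrix algebras, with blocks indexed by `ι` and the rows and columns
of block `i` by `κ i`. -/
abbrev BlockMatrix {ι : Type*} (κ : ι → Type*) := ∀ i, Matrix (κ i) (κ i) ℂ

/-- A system of matrix units in `S`, given by its columns: the partial isometries `vec ⟨i, a⟩` have
source the minimal projection `corner i` and orthogonal ranges, and the matrix units of block `i`
are the products `vec ⟨i, a⟩ * star (vec ⟨i, b⟩)`. -/
structure MatrixSystem {ι : Type*} (S : NonUnitalStarSubalgebra ℂ E) (κ : ι → Type*) where
  corner : ι → E
  vec : (Σ i, κ i) → E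
  isMinimal : ∀ i, IsMinimalProjection S (corner i)
  isOrthogonal : IsOrthogonalFamily S (fun p => corner p.1) vec

namespace MatrixSystem

variable {ι : Type*} {S : NonUnitalStarSubalgebra ℂ E} {κ : ι → Type*} (X : MatrixSystem S κ)

theorem vec_mul_corner (p : Σ i, κ i) : X.vec p * X.corner p.1 = X.vec p :=
  X.isOrthogonal.mul_source (X.isMinimal p.1).isStarProjection

theorem corner_mul_star_vec (p : Σ i, κ i) : X.corner p.1 * star (X.vec p) = star (X.vec p) := by
  simpa [(X.isMinimal p.1).star_eq] using congrArg star (X.vec_mul_corner p)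

/-- The linear map reading off the block-diagonal matrix coefficients of an element of `S` with
respect to the matrix units, left inverse to `MatrixSystem.realize`. -/
noncomputable def compress : E →ₗ[ℂ] BlockMatrix κ where
  toFun x i := Matrix.of fun a b =>
    (X.isMinimal i).coeff (star (X.vec ⟨i, a⟩) * x * X.vec ⟨i, b⟩)
  map_add' x y := by ext; simp [mul_add, add_mul]
  map_smul' c x := by ext; simp [mul_smul_comm, smul_mul_assoc]

theorem compress_apply (x : E) (i : ι) (a b : κ i) :
    X.compress x i a b = (X.isMinimal i).coeff (star (X.vec ⟨i, a⟩) * x * X.vec ⟨i, b⟩) :=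
  rfl

theorem compress_smul_corner {s : E} (hs : s ∈ S) (i : ι) (a b : κ i) :
    X.compress s i a b • X.corner i = star (X.vec ⟨i, a⟩) * s * X.vec ⟨i, b⟩ := by
  rw [compress_apply, (X.isMinimal i).coeff_smul_eq
      (mul_mem (mul_mem (star_mem (X.isOrthogonal.mem _)) hs) (X.isOrthogonal.mem _)),
    mul_assoc, mul_assoc, X.vec_mul_corner ⟨i, b⟩, ← mul_assoc, ← mul_assoc,
    X.corner_mul_star_vec ⟨i, a⟩]

/-- Restriction of a matrix system to some of its blocks and columns, possibly with repetition of
blocks. -/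
def comap {ι' : Type*} {κ' : ι' → Type*} (f : ι' → ι) (g : ∀ i, κ' i → κ (f i))
    (hfg : Function.Injective fun p : Σ i, κ' i => (⟨f p.1, g p.1 p.2⟩ : Σ i, κ i)) :
    MatrixSystem S κ' where
  corner := X.corner ∘ f
  vec p := X.vec ⟨f p.1, g p.1 p.2⟩
  isMinimal i := X.isMinimal (f i)
  isOrthogonal := X.isOrthogonal.comp_injective hfg

/-- The one-by-one matrix system of a minimal projection. -/
def ofMinimal {e : E} (he : IsMinimalProjection S e) : MatrixSystem S fun _ : PUnit => PUnit where
  corner _ := e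
  vec _ := e
  isMinimal _ := he
  isOrthogonal := ⟨fun _ => he.mem, fun _ => by rw [he.star_eq, he.mul_self],
    fun ⟨⟨⟩, ⟨⟩⟩ ⟨⟨⟩, ⟨⟩⟩ h => (h rfl).elim⟩

variable [Fintype ι] [∀ i, Fintype (κ i)]

/-- The linear map underlying `MatrixSystem.realize`. -/
noncomputable def realizeLinear : BlockMatrix κ →ₗ[ℂ] E where
  toFun m := ∑ i, ∑ a, ∑ b, m i a b • (X.vec ⟨i, a⟩ * star (X.vec ⟨i, b⟩))
  map_add' m n := by simp [add_smul, Finset.sum_add_distrib]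
  map_smul' c m := by simp [Finset.smul_sum, smul_smul]

theorem realizeLinear_apply (m : BlockMatrix κ) :
    X.realizeLinear m = ∑ i, ∑ a, ∑ b, m i a b • (X.vec ⟨i, a⟩ * star (X.vec ⟨i, b⟩)) :=
  rfl

theorem realizeLinear_mul_vec (m : BlockMatrix κ) (j : ι) (b : κ j) :
    X.realizeLinear m * X.vec ⟨j, b⟩ = ∑ a, m j a b • X.vec ⟨j, a⟩ := by
  classical
  have horth (i : ι) (a b' : κ i) :
      m i a b' • (X.vec ⟨i, a⟩ * star (X.vec ⟨i, b'⟩)) * X.vec ⟨j, b⟩ =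
        if (⟨i, b'⟩ : Σ i, κ i) = ⟨j, b⟩ then m i a b' • X.vec ⟨i, a⟩ else 0 := by
    rw [smul_mul_assoc, mul_assoc, X.isOrthogonal.star_mul_eq, mul_ite, X.vec_mul_corner ⟨i, a⟩,
      mul_zero, smul_ite, smul_zero]
  simp only [realizeLinear_apply, Finset.sum_mul, horth]
  rw [Finset.sum_eq_single_of_mem j (Finset.mem_univ j)]
  · simp
  · intro i _ hij
    simp [hij]

/-- The *-homomorphism sending the standard matrix units to those of the system. -/
noncomputable def realize : BlockMatrix κ →⋆ₙₐ[ℂ] E where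
  __ := X.realizeLinear
  map_zero' := map_zero X.realizeLinear
  map_mul' m n := by
    change X.realizeLinear (m * n) = X.realizeLinear m * X.realizeLinear n
    rw [X.realizeLinear_apply n]
    simp only [Finset.mul_sum, mul_smul_comm, ← mul_assoc, realizeLinear_mul_vec]
    simp only [realizeLinear_apply, Pi.mul_apply, Matrix.mul_apply, Finset.sum_smul, Finset.sum_mul,
      Finset.smul_sum, smul_mul_assoc, smul_smul]
    refine Finset.sum_congr rfl fun i _ => ?_
    rw [Finset.sum_comm, Finset.sum_comm_cycle]
    simp only [mul_comm]
  map_star' m := by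
    change X.realizeLinear (star m) = star (X.realizeLinear m)
    simp only [realizeLinear_apply, star_sum, star_smul, star_mul, star_star, Pi.star_apply,
      Matrix.star_apply]
    exact Finset.sum_congr rfl fun i _ => Finset.sum_comm

theorem realize_apply (m : BlockMatrix κ) :
    X.realize m = ∑ i, ∑ a, ∑ b, m i a b • (X.vec ⟨i, a⟩ * star (X.vec ⟨i, b⟩)) :=
  rfl

theorem realize_mul_vec (m : BlockMatrix κ) (j : ι) (b : κ j) :
    X.realize m * X.vec ⟨j, b⟩ = ∑ a, m j a b • X.vec ⟨j, a⟩ :=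
  X.realizeLinear_mul_vec m j b

theorem realize_mem (m : BlockMatrix κ) : X.realize m ∈ S :=
  sum_mem fun _ _ => sum_mem fun _ _ => sum_mem fun _ _ =>
    SMulMemClass.smul_mem _ (mul_mem (X.isOrthogonal.mem _) (star_mem (X.isOrthogonal.mem _)))

theorem compress_realize (m : BlockMatrix κ) : X.compress (X.realize m) = m := by
  classical
  ext i a b
  have h : star (X.vec ⟨i, a⟩) * X.realize m * X.vec ⟨i, b⟩ = m i a b • X.corner i := by
    rw [mul_assoc, realize_mul_vec]
    simp [Finset.mul_sum, mul_smul_comm, X.isOrthogonal.star_mul_eq]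
  refine (X.isMinimal i).coeff_eq_of_mul_mul_eq_smul ?_
  rw [h, mul_smul_comm, smul_mul_assoc, (X.isMinimal i).mul_self, (X.isMinimal i).mul_self]

/-- The unit of the C*-algebra spanned by the matrix units. -/
def support : E := ∑ p, X.vec p * star (X.vec p)

theorem isStarProjection_support : IsStarProjection X.support :=
  X.isOrthogonal.isStarProjection_sum fun p => (X.isMinimal p.1).isStarProjection

theorem support_mul_vec (p : Σ i, κ i) : X.support * X.vec p = X.vec p := by
  simpa [support] using congrArg star
    (X.isOrthogonal.star_mul_sum (fun p => (X.isMinimal p.1).isStarProjection) p)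

theorem compress_mul_support (x : E) : X.compress (x * X.support) = X.compress x := by
  ext i a b
  rw [compress_apply, compress_apply, mul_assoc, mul_assoc, support_mul_vec, ← mul_assoc]

theorem mul_support_eq_realize {x : E} {m : BlockMatrix κ}
    (h : ∀ i b, x * X.vec ⟨i, b⟩ = ∑ a, m i a b • X.vec ⟨i, a⟩) :
    x * X.support = X.realize m := by
  simp only [support, realize_apply, Fintype.sum_sigma, Finset.mul_sum, ← mul_assoc, h,
    Finset.sum_mul, smul_mul_assoc]
  exact Finset.sum_congr rfl fun i _ => Finset.sum_comm

theorem realize_mul_support (m : BlockMatrix κ) : X.realize m * X.support = X.realize m :=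
  X.mul_support_eq_realize (X.realize_mul_vec m)

theorem support_mul_realize (m : BlockMatrix κ) : X.support * X.realize m = X.realize m := by
  simpa [← map_star, X.isStarProjection_support.isSelfAdjoint.star_eq] using
    congrArg star (X.realize_mul_support (star m))

variable [∀ i, DecidableEq (κ i)]

theorem norm_realize_le (m : BlockMatrix κ) : ‖X.realize m‖ ≤ ‖m‖ :=
  NonUnitalStarAlgHom.norm_apply_le X.realize m

theorem norm_realize (m : BlockMatrix κ) : ‖X.realize m‖ = ‖m‖ :=
  NonUnitalStarAlgHom.norm_map X.realize
    (Function.LeftInverse.injective X.compress_realize) m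

theorem realize_single_compress [DecidableEq ι] {s : E} (hs : s ∈ S) (i : ι) :
    X.realize (Pi.single i (X.compress s i)) =
      X.realize (Pi.single i 1) * s * X.realize (Pi.single i 1) := by
  have hP : X.realize (Pi.single i 1) = ∑ a, X.vec ⟨i, a⟩ * star (X.vec ⟨i, a⟩) := by
    rw [realize_apply, Finset.sum_eq_single_of_mem i (Finset.mem_univ i)]
    · simp [Matrix.one_apply]
    · intro j _ hj
      simp [hj]
  have hterm (a b : κ i) :
      X.vec ⟨i, a⟩ * star (X.vec ⟨i, a⟩) * s * (X.vec ⟨i, b⟩ * star (X.vec ⟨i, b⟩)) =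
        X.compress s i a b • (X.vec ⟨i, a⟩ * star (X.vec ⟨i, b⟩)) := by
    calc _ = X.vec ⟨i, a⟩ * (star (X.vec ⟨i, a⟩) * s * X.vec ⟨i, b⟩) * star (X.vec ⟨i, b⟩) := by
          simp only [mul_assoc]
      _ = _ := by
          rw [← X.compress_smul_corner hs, mul_smul_comm, X.vec_mul_corner ⟨i, a⟩, smul_mul_assoc]
  rw [realize_apply, Finset.sum_eq_single_of_mem i (Finset.mem_univ i)]
  · simp only [hP, Finset.sum_mul, Finset.mul_sum, hterm, Pi.single_eq_same]
    exact Finset.sum_comm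
  · intro j _ hj
    simp [hj]

theorem norm_compress_le {s : E} (hs : s ∈ S) : ‖X.compress s‖ ≤ ‖s‖ := by
  classical
  refine (pi_norm_le_iff_of_nonneg (norm_nonneg s)).mpr fun i => ?_
  have hP : ‖X.realize (Pi.single i 1)‖ ≤ 1 := by
    refine IsStarProjection.norm_le _ (IsStarProjection.map ?_ X.realize)
    exact ⟨by simp [IsIdempotentElem, ← Pi.single_mul], by simp [IsSelfAdjoint]⟩
  calc ‖X.compress s i‖ = ‖X.realize (Pi.single i 1) * s * X.realize (Pi.single i 1)‖ := by
        rw [← X.realize_single_compress hs, norm_realize, Pi.norm_single]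
    _ ≤ 1 * ‖s‖ * 1 := by
        refine (norm_mul_le _ _).trans (mul_le_mul ((norm_mul_le _ _).trans ?_) hP
          (norm_nonneg _) (by positivity))
        gcongr
    _ = ‖s‖ := by ring

end MatrixSystem

namespace MatrixSystem

variable {C : Type*} [CStarAlgebra C] {S : NonUnitalStarSubalgebra ℂ C} {ι : Type*} {κ : ι → Type*}
  [Fintype ι] [∀ i, Fintype (κ i)]

/-- A matrix system exhausting `S`: its matrix units span all of `S` and their support is the
ambient unit. -/
structure IsComplete (X : MatrixSystem S κ) : Prop where
  support_eq_one : X.support = 1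
  corner_mul_mul_corner : ∀ ⦃i j⦄, i ≠ j → ∀ s ∈ S, X.corner i * s * X.corner j = 0

variable {X : MatrixSystem S κ}

theorem IsComplete.star_vec_mul_mul_vec (hX : X.IsComplete) {i j : ι} (hij : i ≠ j) (a : κ i)
    (b : κ j) {s : C} (hs : s ∈ S) : star (X.vec ⟨i, a⟩) * s * X.vec ⟨j, b⟩ = 0 := by
  have hmem : star (X.vec ⟨i, a⟩) * s * X.vec ⟨j, b⟩ ∈ S :=
    mul_mem (mul_mem (star_mem (X.isOrthogonal.mem _)) hs) (X.isOrthogonal.mem _)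
  rw [← hX.corner_mul_mul_corner hij _ hmem]
  simp only [← mul_assoc, X.corner_mul_star_vec ⟨i, a⟩]
  rw [mul_assoc _ _ (X.corner j), X.vec_mul_corner ⟨j, b⟩]

theorem IsComplete.realize_compress (hX : X.IsComplete) {s : C} (hs : s ∈ S) :
    X.realize (X.compress s) = s := by
  suffices h : s * X.support = X.realize (X.compress s) by rw [← h, hX.support_eq_one, mul_one]
  refine X.mul_support_eq_realize fun j b => ?_
  calc s * X.vec ⟨j, b⟩ = X.support * (s * X.vec ⟨j, b⟩) := by rw [hX.support_eq_one, one_mul]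
    _ = ∑ i, ∑ a, X.vec ⟨i, a⟩ * (star (X.vec ⟨i, a⟩) * s * X.vec ⟨j, b⟩) := by
        simp only [support, Fintype.sum_sigma, Finset.sum_mul, mul_assoc]
    _ = ∑ a, X.vec ⟨j, a⟩ * (star (X.vec ⟨j, a⟩) * s * X.vec ⟨j, b⟩) := by
        refine Finset.sum_eq_single_of_mem j (Finset.mem_univ j) fun i _ hi => ?_
        simp [hX.star_vec_mul_mul_vec hi _ _ hs]
    _ = ∑ a, X.compress s j a b • X.vec ⟨j, a⟩ := by
        simp only [← X.compress_smul_corner hs, mul_smul_comm]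
        exact Finset.sum_congr rfl fun a _ => by rw [X.vec_mul_corner ⟨j, a⟩]

end MatrixSystem

/-- A branching of a matrix system in `S` into `S'`: the new minimal projections `corner j`
together with partial isometries `edge i ⟨j, t⟩` from `corner j` into the old `X.corner i`, so that
`τ i j` counts the multiplicity of the new block `j` in the old block `i`. -/
structure Branching {ι : Type*} {S : NonUnitalStarSubalgebra ℂ E} {κ : ι → Type*}
    (X : MatrixSystem S κ) (S' : NonUnitalStarSubalgebra ℂ E) {ι' : Type*}
    (τ : ι → ι' → Type*) where
  le : S ≤ S'
  corner : ι' → E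
  edge : ∀ i, (Σ j, τ i j) → E
  isMinimal : ∀ j, IsMinimalProjection S' (corner j)
  isOrthogonal : ∀ i, IsOrthogonalFamily S' (fun t => corner t.1) (edge i)
  corner_mul_edge : ∀ i t, X.corner i * edge i t = edge i t
  star_edge_mul_mul_edge : ∀ ⦃i i'⦄, i ≠ i' → ∀ t t', ∀ s ∈ S,
    star (edge i t) * s * edge i' t' = 0

namespace Branching

variable {ι : Type*} {S S' : NonUnitalStarSubalgebra ℂ E} {κ : ι → Type*} {X : MatrixSystem S κ}
  {ι' : Type*} {τ : ι → ι' → Type*} (Y : Branching X S' τ)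

theorem star_edge_mul_smul_mul_edge [∀ i j, DecidableEq (τ i j)] (c : ℂ) (i : ι) {j : ι'}
    (t t' : τ i j) :
    star (Y.edge i ⟨j, t⟩) * (c • X.corner i) * Y.edge i ⟨j, t'⟩ =
      (c * (1 : Matrix (τ i j) (τ i j) ℂ) t t') • Y.corner j := by
  classical
  rw [mul_smul_comm, smul_mul_assoc, mul_assoc, Y.corner_mul_edge, (Y.isOrthogonal i).star_mul_eq]
  obtain rfl | h := eq_or_ne t t' <;> simp_all

theorem star_path_mul_path (i i' : ι) (t : Σ j, τ i j) (t' : Σ j, τ i' j) (a : κ i) (a' : κ i')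
    (s : E) :
    star (X.vec ⟨i, a⟩ * Y.edge i t) * s * (X.vec ⟨i', a'⟩ * Y.edge i' t') =
      star (Y.edge i t) * (star (X.vec ⟨i, a⟩) * s * X.vec ⟨i', a'⟩) * Y.edge i' t' := by
  simp only [star_mul, mul_assoc]

/-- The matrix system in `S'` whose columns are the paths: a column of `X` followed by an edge. -/
def refine : MatrixSystem S' fun j => Σ i, κ i × τ i j where
  corner := Y.corner
  vec p := X.vec ⟨p.2.1, p.2.2.1⟩ * Y.edge p.2.1 ⟨p.1, p.2.2.2⟩
  isMinimal := Y.isMinimal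
  isOrthogonal := by
    let path (p : Σ j, Σ i, κ i × τ i j) : Σ q : Σ i, κ i, Σ j, τ q.1 j :=
      ⟨⟨p.2.1, p.2.2.1⟩, ⟨p.1, p.2.2.2⟩⟩
    have hpath : Function.Injective path :=
      Function.LeftInverse.injective (g := fun x => ⟨x.2.1, x.1.1, x.1.2, x.2.2⟩) fun _ => rfl
    exact ((X.isOrthogonal.mono Y.le).mul_sigma (h := fun x => Y.corner x.2.1)
      (z := fun x => Y.edge x.1.1 x.2) (fun q => Y.isOrthogonal q.1)
      fun x => Y.corner_mul_edge x.1.1 x.2).comp_injective hpath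

theorem support_mul_support_refine [Fintype ι] [∀ i, Fintype (κ i)] [Fintype ι']
    [∀ i j, Fintype (τ i j)] : X.support * Y.refine.support = Y.refine.support :=
  mul_sum_mul_star_eq_self fun p => by
    change X.support * (X.vec _ * Y.edge _ _) = X.vec _ * Y.edge _ _
    rw [← mul_assoc, X.support_mul_vec]

section Amplify

variable [DecidableEq ι] [∀ i j, DecidableEq (τ i j)]

/-- The inclusion of block algebras with multiplicities `τ`: block `j` of the image contains
`card (τ i j)` copies of block `i`. -/
def amplify (τ : ι → ι' → Type*) [∀ i j, DecidableEq (τ i j)] (m : BlockMatrix κ) :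
    BlockMatrix fun j => Σ i, κ i × τ i j :=
  fun j => Matrix.blockDiagonal' fun i => m i ⊗ₖ (1 : Matrix (τ i j) (τ i j) ℂ)

theorem amplify_apply_eq (m : BlockMatrix κ) (i : ι) (j : ι') (p q : κ i × τ i j) :
    amplify τ m j ⟨i, p⟩ ⟨i, q⟩ = m i p.1 q.1 * (1 : Matrix (τ i j) (τ i j) ℂ) p.2 q.2 := by
  rw [amplify, Matrix.blockDiagonal'_apply_eq, Matrix.kronecker_apply]

theorem amplify_apply_ne (m : BlockMatrix κ) {i i' : ι} (h : i ≠ i') (j : ι') (p : κ i × τ i j)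
    (q : κ i' × τ i' j) : amplify τ m j ⟨i, p⟩ ⟨i', q⟩ = 0 := by
  rw [amplify, Matrix.blockDiagonal'_apply_ne _ _ _ h]

theorem amplify_star (m : BlockMatrix κ) : amplify τ (star m) = star (amplify τ m) := by
  ext j : 1
  simp [amplify, Matrix.star_eq_conjTranspose, Matrix.blockDiagonal'_conjTranspose,
    Matrix.conjTranspose_kronecker]

theorem compress_refine {s : E} (hs : s ∈ S) :
    Y.refine.compress s = amplify τ (X.compress s) := by
  ext j ⟨i, a, t⟩ ⟨i', a', t'⟩
  refine (Y.isMinimal j).coeff_eq_of_mul_mul_eq_smul ?_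
  have hvec : star (Y.refine.vec ⟨j, i, a, t⟩) * s * Y.refine.vec ⟨j, i', a', t'⟩ =
      amplify τ (X.compress s) j ⟨i, a, t⟩ ⟨i', a', t'⟩ • Y.corner j := by
    refine (Y.star_path_mul_path i i' ⟨j, t⟩ ⟨j, t'⟩ a a' s).trans ?_
    by_cases h : i = i'
    · subst h
      rw [← X.compress_smul_corner hs, star_edge_mul_smul_mul_edge, amplify_apply_eq]
    · rw [Y.star_edge_mul_mul_edge h, amplify_apply_ne _ h, zero_smul]
      exact mul_mem (mul_mem (star_mem (X.isOrthogonal.mem _)) hs) (X.isOrthogonal.mem _)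
  rw [hvec, mul_smul_comm, smul_mul_assoc, (Y.isMinimal j).mul_self, (Y.isMinimal j).mul_self]

variable [Fintype ι] [∀ i, Fintype (κ i)] [Fintype ι'] [∀ i j, Fintype (τ i j)]

theorem realize_refine (m : BlockMatrix κ) :
    Y.refine.realize (amplify τ m) = X.realize m * Y.refine.support := by
  refine (Y.refine.mul_support_eq_realize ?_).symm
  rintro j ⟨i, a, t⟩
  rw [Fintype.sum_sigma, Finset.sum_eq_single_of_mem i (Finset.mem_univ i)]
  · change X.realize m * (X.vec ⟨i, a⟩ * Y.edge i ⟨j, t⟩) =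
      ∑ q : κ i × τ i j, _ • (X.vec ⟨i, q.1⟩ * Y.edge i ⟨j, q.2⟩)
    rw [← mul_assoc, X.realize_mul_vec]
    simp [amplify_apply_eq, Fintype.sum_prod_type, Matrix.one_apply, Finset.sum_mul,
      smul_mul_assoc]
  · intro i' _ hi'
    simp [amplify_apply_ne m hi' j]

theorem realize_refine' (m : BlockMatrix κ) :
    Y.refine.realize (amplify τ m) = Y.refine.support * X.realize m := by
  have h := congrArg star (Y.realize_refine (star m))
  rwa [← map_star, ← amplify_star, star_mul, ← map_star, star_star,
    Y.refine.isStarProjection_support.isSelfAdjoint.star_eq] at h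

end Amplify

section Retract

variable (e : ∀ i, Σ j, τ i j)

/-- The subsystem of `Y.refine` with one block for each `i`, consisting of the paths that end with
the edge `e i`. -/
def selected : MatrixSystem S' κ :=
  Y.refine.comap (fun i => (e i).1) (fun i a => ⟨i, a, (e i).2⟩)
    (Function.LeftInverse.injective (g := fun x => ⟨x.2.1, x.2.2.1⟩) fun _ => rfl)

theorem compress_selected {s : E} (hs : s ∈ S) : (Y.selected e).compress s = X.compress s := by
  classical
  ext i a b
  change Y.refine.compress s (e i).1 ⟨i, a, (e i).2⟩ ⟨i, b, (e i).2⟩ = _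
  rw [Y.compress_refine hs, amplify_apply_eq, Matrix.one_apply_eq, mul_one]

variable [Fintype ι] [∀ i, Fintype (κ i)]

/-- A conditional expectation of `S'` onto the span of the matrix units of `X`. -/
noncomputable def retract : E →ₗ[ℂ] E := X.realizeLinear ∘ₗ (Y.selected e).compress

theorem retract_mem (s : E) : Y.retract e s ∈ S := X.realize_mem _

theorem norm_retract_le {s : E} (hs : s ∈ S') : ‖Y.retract e s‖ ≤ ‖s‖ := by
  classical
  exact (X.norm_realize_le _).trans ((Y.selected e).norm_compress_le hs)

end Retract

end Branching

namespace Branching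

variable {C : Type*} [CStarAlgebra C] {S S' : NonUnitalStarSubalgebra ℂ C} {ι : Type*}
  {κ : ι → Type*} {X : MatrixSystem S κ} {ι' : Type*} {τ : ι → ι' → Type*} (Y : Branching X S' τ)
  [Fintype ι] [∀ i, Fintype (κ i)]

theorem retract_eq_self (hX : X.IsComplete) (e : ∀ i, Σ j, τ i j) {s : C} (hs : s ∈ S) :
    Y.retract e s = s := by
  change X.realize ((Y.selected e).compress s) = s
  rw [Y.compress_selected e hs, hX.realize_compress hs]

theorem isComplete_refine [Fintype ι'] [∀ i j, Fintype (τ i j)] (hX : X.IsComplete)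
    (hedge : ∀ i, ∑ t, Y.edge i t * star (Y.edge i t) = X.corner i)
    (hcorner : ∀ ⦃j j'⦄, j ≠ j' → ∀ s ∈ S', Y.corner j * s * Y.corner j' = 0) :
    Y.refine.IsComplete where
  support_eq_one := by
    rw [← hX.support_eq_one]
    calc Y.refine.support = ∑ i, ∑ a, X.vec ⟨i, a⟩ *
          (∑ t, Y.edge i t * star (Y.edge i t)) * star (X.vec ⟨i, a⟩) := by
          simp only [MatrixSystem.support, refine, Fintype.sum_sigma, Fintype.sum_prod_type,
            Finset.mul_sum, Finset.sum_mul, star_mul, mul_assoc]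
          rw [Finset.sum_comm]
          exact Finset.sum_congr rfl fun i _ => Finset.sum_comm
      _ = X.support := by
          simp only [MatrixSystem.support, Fintype.sum_sigma, hedge, mul_assoc]
          exact Finset.sum_congr rfl fun i _ => Finset.sum_congr rfl fun a _ => by
            rw [X.corner_mul_star_vec ⟨i, a⟩]
  corner_mul_mul_corner := hcorner

end Branching

theorem star_mul_mul_eq_of_mul_eq {p p' x x' : E} (hp : star p = p) (hx : p * x = x)
    (hx' : p' * x' = x') (s : E) : star x * s * x' = star x * (p * s * p') * x' := by
  conv_lhs => rw [← hx, ← hx', star_mul, hp]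
  simp only [mul_assoc]

theorem MatrixSystem.IsComplete.exists_branching {C : Type*} [CStarAlgebra C]
    {S S' : NonUnitalStarSubalgebra ℂ C} [FiniteDimensional ℂ S'] {ι : Type*} {κ : ι → Type*}
    [Fintype ι] [∀ i, Fintype (κ i)] {X : MatrixSystem S κ} (hX : X.IsComplete) (hS : S ≤ S') :
    ∃ (R : Finset C) (U : ι → Finset C) (src : ∀ i, U i → R)
      (Y : Branching X S' fun i j => {x // src i x = j}),
      (∀ i, Nonempty (U i)) ∧
      ∀ [∀ i j, Fintype {x // src i x = j}], Y.refine.IsComplete := by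
  obtain ⟨R, hR, hdisj, hfull⟩ := exists_disjoint_minimalProjections S'
  choose U hU hUR hsum using fun i =>
    exists_orthogonalFamily_sum_eq hR hfull (hS (X.isMinimal i).mem)
      (X.isMinimal i).isStarProjection
  let src (i : ι) (x : U i) : R := ⟨star (x : C) * x, (hUR i x x.2).2⟩
  let Y : Branching X S' fun i j => {x // src i x = j} :=
    { le := hS
      corner := fun j => j
      edge := fun i t => (t.2 : U i)
      isMinimal := fun j => hR j j.2
      isOrthogonal := fun i => by
        have hsrc : (fun t : Σ j, {x // src i x = j} => (t.1 : C)) =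
            (fun x : U i => star (x : C) * x) ∘ Equiv.sigmaFiberEquiv (src i) :=
          funext fun t => congrArg Subtype.val t.2.2.symm
        rw [hsrc]
        exact (hU i).comp_injective (Equiv.sigmaFiberEquiv (src i)).injective
      corner_mul_edge := fun i t => (hUR i _ (t.2 : U i).2).1
      star_edge_mul_mul_edge := fun i i' hne t t' s hs => by
        rw [star_mul_mul_eq_of_mul_eq (X.isMinimal i).star_eq (hUR i _ (t.2 : U i).2).1
          (hUR i' _ (t'.2 : U i').2).1, hX.corner_mul_mul_corner hne s hs, mul_zero, zero_mul] }
  refine ⟨R, U, src, Y, fun i => ?_, fun {_} => Y.isComplete_refine hX (fun i => ?_) ?_⟩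
  · by_contra hempty
    rw [not_nonempty_iff] at hempty
    exact (X.isMinimal i).ne_zero (by rw [← hsum i, Finset.univ_eq_empty, Finset.sum_empty])
  · rw [← hsum i]
    exact Fintype.sum_equiv (Equiv.sigmaFiberEquiv (src i)) _ _ fun _ => rfl
  · intro j j' hne s hs
    exact hdisj j.2 j'.2 (Subtype.coe_ne_coe.mpr hne) s hs

theorem IsDoublingSequence.exists_branching {S : ℕ → NonUnitalStarSubalgebra ℂ E} {f : ℕ → E}
    (hf : IsDoublingSequence S f) (hS : Monotone S) {l : ℕ} {ι ι' : Type*} {κ : ι → Type*}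
    {X : MatrixSystem (S l) κ} (hX : ∀ i, X.corner i = f l) (τ : ι → ι' → Type*) [Finite ι]
    [Finite ι'] [∀ i j, Finite (τ i j)] :
    ∃ l' > l, ∃ Y : Branching X (S l') τ, ∀ j, Y.corner j = f l' := by
  obtain ⟨l', hl', w, hw, hfw⟩ := hf.exists_family hS (Σ i, Σ j, τ i j) l
  refine ⟨l', hl', ⟨hS hl'.le, fun _ => f l', fun i t => w ⟨i, t⟩, fun _ => hf.isMinimal l',
    fun i => hw.comp_injective sigma_mk_injective, fun i t => by rw [hX, hfw], ?_⟩, fun _ => rfl⟩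
  intro i i' hne t t' s hs
  obtain ⟨c, hc⟩ := (hf.isMinimal l).exists_smul_eq s hs
  rw [star_mul_mul_eq_of_mul_eq (hf.isMinimal l).star_eq (hfw ⟨i, t⟩) (hfw ⟨i', t'⟩), hc,
    mul_smul_comm, smul_mul_assoc, mul_assoc, hfw, hw.pairwise fun h => hne (congrArg Sigma.fst h),
    smul_zero]

theorem norm_add_eq_max_of_corner {p x z : E} (hp : IsStarProjection p) (hxp : x * p = x)
    (hpx : p * x = x) (hzp : z * p = 0) (hpz : p * z = 0) : ‖x + z‖ = max ‖x‖ ‖z‖ := by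
  have hxz : star x * z = 0 := by
    rw [← hpx, star_mul, hp.isSelfAdjoint.star_eq, mul_assoc, hpz, mul_zero]
  have hzx : star z * x = 0 := by simpa using congrArg star hxz
  have hxzs : x * star z = 0 := by
    have hpz' : p * star z = 0 := by simpa [hp.isSelfAdjoint.star_eq] using congrArg star hzp
    rw [← hxp, mul_assoc, hpz', mul_zero]
  have hsq : ‖x + z‖ * ‖x + z‖ = max (‖x‖ * ‖x‖) (‖z‖ * ‖z‖) := by
    rw [← CStarRing.norm_star_mul_self, ← CStarRing.norm_star_mul_self,
      ← CStarRing.norm_star_mul_self, star_add, add_mul, mul_add, mul_add, hxz, hzx, add_zero,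
      zero_add]
    refine IsSelfAdjoint.norm_add_eq_max (.star_mul_self x) (.star_mul_self z) ?_
    rw [mul_assoc, ← mul_assoc x, hxzs, zero_mul, mul_zero]
  obtain hle | hle := le_total ‖x‖ ‖z‖
  · rw [max_eq_right (mul_self_le_mul_self (norm_nonneg x) hle)] at hsq
    rwa [max_eq_right hle, ← mul_self_inj (norm_nonneg _) (norm_nonneg _)]
  · rw [max_eq_left (mul_self_le_mul_self (norm_nonneg z) hle)] at hsq
    rwa [max_eq_left hle, ← mul_self_inj (norm_nonneg _) (norm_nonneg _)]

/-! ### Frames and their refinements -/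

universe u

variable {D : Type u} [CStarAlgebra D]

/-- An identification of `C` with a C*-subalgebra of `S`: a complete matrix system of `C` together
with a matrix system of `S` of the same shape, all of whose columns have source `f`. -/
structure Frame (C : NonUnitalStarSubalgebra ℂ D) (S : NonUnitalStarSubalgebra ℂ E) (f : E) where
  ι : Type u
  κ : ι → Type u
  [fintypeBlocks : Fintype ι]
  [fintypeColumns : ∀ i, Fintype (κ i)]
  source : MatrixSystem C κ
  isComplete : source.IsComplete
  target : MatrixSystem S κ
  target_corner : ∀ i, target.corner i = f

namespace Frame

attribute [instance] fintypeBlocks fintypeColumns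

variable {C C' : NonUnitalStarSubalgebra ℂ D} {S S' : NonUnitalStarSubalgebra ℂ E} {f f' : E}
  (F : Frame C S f)

/-- The embedding of `C` into `S` matching the two matrix systems. -/
noncomputable def embed : D →ₗ[ℂ] E := F.target.realizeLinear ∘ₗ F.source.compress

/-- The compression of `S` to `C` matching the two matrix systems, left inverse to `Frame.embed`. -/
noncomputable def recover : E →ₗ[ℂ] D := F.source.realizeLinear ∘ₗ F.target.compress

/-- The unit of the range of `Frame.embed`. -/
def support : E := F.target.support

theorem embed_mem (a : D) : F.embed a ∈ S := F.target.realize_mem _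

theorem norm_embed_le {a : D} (ha : a ∈ C) : ‖F.embed a‖ ≤ ‖a‖ := by
  classical
  exact (F.target.norm_realize_le _).trans (F.source.norm_compress_le ha)

theorem norm_recover_le {b : E} (hb : b ∈ S) : ‖F.recover b‖ ≤ ‖b‖ := by
  classical
  exact (F.source.norm_realize_le _).trans (F.target.norm_compress_le hb)

theorem recover_embed {a : D} (ha : a ∈ C) : F.recover (F.embed a) = a := by
  change F.source.realize (F.target.compress (F.target.realize (F.source.compress a))) = a
  rw [F.target.compress_realize, F.isComplete.realize_compress ha]

theorem recover_mul_support (b : E) : F.recover (b * F.support) = F.recover b :=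
  congrArg F.source.realize (F.target.compress_mul_support b)

theorem isStarProjection_support : IsStarProjection F.support :=
  F.target.isStarProjection_support

theorem embed_mul_support (a : D) : F.embed a * F.support = F.embed a :=
  F.target.realize_mul_support _

theorem support_mul_embed (a : D) : F.support * F.embed a = F.embed a :=
  F.target.support_mul_realize _

theorem exists_of_one [Nontrivial D] (hf : IsMinimalProjection S f) :
    Nonempty (Frame (⊥ : StarSubalgebra ℂ D).toNonUnitalStarSubalgebra S f) := by
  have hone : IsMinimalProjection (⊥ : StarSubalgebra ℂ D).toNonUnitalStarSubalgebra (1 : D) :=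
    ⟨one_mem (⊥ : StarSubalgebra ℂ D), .one _, one_ne_zero, fun s hs => by
      obtain ⟨c, rfl⟩ := StarSubalgebra.mem_bot.mp hs
      exact ⟨c, by simp [Algebra.algebraMap_eq_smul_one]⟩⟩
  have hcomplete : (MatrixSystem.ofMinimal hone).IsComplete :=
    ⟨by simp [MatrixSystem.support, MatrixSystem.ofMinimal], fun _ _ h => (h rfl).elim⟩
  exact ⟨_, _, .ofMinimal hone, hcomplete, .ofMinimal hf, fun _ => rfl⟩

/-- `F'` refines `F`, with `r` a conditional expectation from the source of `F'` onto that
of `F`. -/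
structure IsRefinement (F : Frame C S f) (F' : Frame C' S' f') (r : D →ₗ[ℂ] D) : Prop where
  support_mul_support : F.support * F'.support = F'.support
  embed_mul_support : ∀ a ∈ C, F.embed a * F'.support = F'.embed a
  support_mul_embed : ∀ a ∈ C, F'.support * F.embed a = F'.embed a
  recover_eq : ∀ b ∈ S, F'.recover b = F.recover b
  retract_mem : ∀ a, r a ∈ C
  norm_retract_le : ∀ a ∈ C', ‖r a‖ ≤ ‖a‖
  retract_eq_self : ∀ a ∈ C, r a = a

theorem exists_isRefinement {S : ℕ → NonUnitalStarSubalgebra ℂ E} {f : ℕ → E}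
    (hf : IsDoublingSequence S f) (hS : Monotone S) (hC : C ≤ C') [FiniteDimensional ℂ C'] {l : ℕ}
    (F : Frame C (S l) (f l)) :
    ∃ l' > l, ∃ (F' : Frame C' (S l') (f l')) (r : D →ₗ[ℂ] D), F.IsRefinement F' r := by
  classical
  obtain ⟨R, U, src, Y, hU, hY⟩ := F.isComplete.exists_branching hC
  obtain ⟨l', hl', Z, hZ⟩ := hf.exists_branching hS F.target_corner fun i j => {x // src i x = j}
  let edge (i : F.ι) : Σ j, {x // src i x = j} := (Equiv.sigmaFiberEquiv (src i)).symm (hU i).some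
  refine ⟨l', hl', ⟨_, _, Y.refine, hY, Z.refine, hZ⟩, Y.retract edge, ?_⟩
  refine ⟨?_, fun a ha => ?_, fun a ha => ?_, fun b hb => ?_, Y.retract_mem edge,
    fun a ha => Y.norm_retract_le edge ha, fun a ha => Y.retract_eq_self F.isComplete edge ha⟩
  · exact Z.support_mul_support_refine
  · change _ = Z.refine.realize (Y.refine.compress a)
    rw [Y.compress_refine ha, Z.realize_refine]
    rfl
  · change _ = Z.refine.realize (Y.refine.compress a)
    rw [Y.compress_refine ha, Z.realize_refine']
    rfl
  · change Y.refine.realize (Z.refine.compress b) = _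
    rw [Z.compress_refine hb, Y.realize_refine, hY.support_eq_one, mul_one]
    rfl

/-- A contractive lift of the inverse of `Frame.recover`: a map `C → S` with values in `S` which the
support projection cuts down to `Frame.embed`. -/
structure IsLift (F : Frame C S f) (γ : D →ₗ[ℂ] E) : Prop where
  mem : ∀ a ∈ C, γ a ∈ S
  norm_le : ∀ a ∈ C, ‖γ a‖ ≤ ‖a‖
  mul_support : ∀ a ∈ C, γ a * F.support = F.embed a
  support_mul : ∀ a ∈ C, F.support * γ a = F.embed a

theorem isLift_embed : F.IsLift F.embed :=
  ⟨fun a _ => F.embed_mem a, fun _ => F.norm_embed_le, fun a _ => F.embed_mul_support a,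
    fun a _ => F.support_mul_embed a⟩

variable {F} {γ : D →ₗ[ℂ] E}

theorem IsLift.recover_apply (hγ : F.IsLift γ) {a : D} (ha : a ∈ C) : F.recover (γ a) = a := by
  rw [← F.recover_mul_support, hγ.mul_support a ha, F.recover_embed ha]

/-- The extension to the source of `F` of a lift `γ` of a coarser frame, precomposed with the
conditional expectation `r` onto the coarser source. It differs from `F.embed` by a part orthogonal
to the support of `F`. -/
noncomputable def extendLift (F : Frame C S f) (r : D →ₗ[ℂ] D) (γ : D →ₗ[ℂ] E) : D →ₗ[ℂ] E :=
  F.embed + (γ - F.embed) ∘ₗ r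

theorem extendLift_apply (r : D →ₗ[ℂ] D) (a : D) :
    F.extendLift r γ a = F.embed a + (γ (r a) - F.embed (r a)) :=
  rfl

namespace IsRefinement

variable {F' : Frame C' S' f'} {r : D →ₗ[ℂ] D}

theorem extendLift_eq (h : F.IsRefinement F' r) {a : D} (ha : a ∈ C) :
    F'.extendLift r γ a = γ a := by
  rw [extendLift_apply, h.retract_eq_self a ha, add_sub_cancel]

theorem sub_embed_mul_support (h : F.IsRefinement F' r) (hγ : F.IsLift γ) {a : D} (ha : a ∈ C) :
    (γ a - F'.embed a) * F'.support = 0 := by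
  rw [sub_mul, F'.embed_mul_support, ← h.support_mul_support, ← mul_assoc, hγ.mul_support a ha,
    h.embed_mul_support a ha, sub_self]

theorem support_mul_sub_embed (h : F.IsRefinement F' r) (hγ : F.IsLift γ) {a : D} (ha : a ∈ C) :
    F'.support * (γ a - F'.embed a) = 0 := by
  have hle : F'.support * F.support = F'.support := by
    simpa [F.isStarProjection_support.isSelfAdjoint.star_eq,
      F'.isStarProjection_support.isSelfAdjoint.star_eq] using
      congrArg star h.support_mul_support
  rw [mul_sub, F'.support_mul_embed, ← hle, mul_assoc, hγ.support_mul a ha,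
    h.support_mul_embed a ha, sub_self]

theorem norm_embed_add_sub (h : F.IsRefinement F' r) (hγ : F.IsLift γ) (a : D) {c : D}
    (hc : c ∈ C) :
    ‖F'.embed a + (γ c - F'.embed c)‖ = max ‖F'.embed a‖ ‖γ c - F'.embed c‖ :=
  norm_add_eq_max_of_corner F'.isStarProjection_support (F'.embed_mul_support a)
    (F'.support_mul_embed a) (h.sub_embed_mul_support hγ hc) (h.support_mul_sub_embed hγ hc)

theorem isLift_extendLift (h : F.IsRefinement F' r) (hγ : F.IsLift γ) (hS : S ≤ S') :
    F'.IsLift (F'.extendLift r γ) where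
  mem a _ := add_mem (F'.embed_mem a)
    (sub_mem (hS (hγ.mem _ (h.retract_mem a))) (F'.embed_mem _))
  norm_le a ha := by
    have hr := h.retract_mem a
    have hcorner : ‖γ (r a) - F'.embed (r a)‖ ≤ ‖γ (r a)‖ := by
      have := h.norm_embed_add_sub hγ (r a) hr
      rw [add_sub_cancel] at this
      exact this ▸ le_max_right _ _
    rw [extendLift_apply, h.norm_embed_add_sub hγ a hr]
    exact max_le (F'.norm_embed_le ha)
      (hcorner.trans ((hγ.norm_le _ hr).trans (h.norm_retract_le a ha)))
  mul_support a _ := by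
    rw [extendLift_apply, add_mul, F'.embed_mul_support,
      h.sub_embed_mul_support hγ (h.retract_mem a), add_zero]
  support_mul a _ := by
    rw [extendLift_apply, mul_add, F'.support_mul_embed,
      h.support_mul_sub_embed hγ (h.retract_mem a), add_zero]

end IsRefinement

end Frame

/-! ### Passage to the limit -/

namespace Frame

/-- A step of the inductive construction: a frame of `C` inside some member of the sequence `S`,
together with a lift of it. -/
structure Stage (C : NonUnitalStarSubalgebra ℂ D) (S : ℕ → NonUnitalStarSubalgebra ℂ E)
    (f : ℕ → E) where
  level : ℕ
  frame : Frame C (S level) (f level)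
  lift : D →ₗ[ℂ] E
  isLift : frame.IsLift lift

namespace Stage

variable {C C' : NonUnitalStarSubalgebra ℂ D} {S : ℕ → NonUnitalStarSubalgebra ℂ E} {f : ℕ → E}

theorem nonempty_bot [Nontrivial D] (hf : IsDoublingSequence S f) :
    Nonempty (Stage (⊥ : StarSubalgebra ℂ D).toNonUnitalStarSubalgebra S f) :=
  (exists_of_one (hf.isMinimal 0)).map fun F => ⟨0, F, F.embed, F.isLift_embed⟩

theorem exists_next (hf : IsDoublingSequence S f) (hS : Monotone S) (hC : C ≤ C')
    [FiniteDimensional ℂ C'] (s : Stage C S f) :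
    ∃ s' : Stage C' S f, s.level < s'.level ∧ (∀ a ∈ C, s'.lift a = s.lift a) ∧
      ∀ b ∈ S s.level, s'.frame.recover b = s.frame.recover b := by
  obtain ⟨l, hl, F, r, hF⟩ := exists_isRefinement hf hS hC s.frame
  exact ⟨⟨l, F, F.extendLift r s.lift, hF.isLift_extendLift s.isLift (hS hl.le)⟩, hl,
    fun a => hF.extendLift_eq, hF.recover_eq⟩

theorem exists_sequence [Nontrivial D] (hf : IsDoublingSequence S f) (hS : Monotone S)
    {C : ℕ → NonUnitalStarSubalgebra ℂ D} (hC : Monotone C) (hfd : ∀ k, FiniteDimensional ℂ (C k))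
    (hone : 1 ∈ C 0) :
    ∃ s : ∀ k, Stage (C k) S f, StrictMono (fun k => (s k).level) ∧
      (∀ k, ∀ a ∈ C k, (s (k + 1)).lift a = (s k).lift a) ∧
      ∀ k, ∀ b ∈ S (s k).level, (s (k + 1)).frame.recover b = (s k).frame.recover b := by
  obtain ⟨s₀⟩ := nonempty_bot (D := D) hf
  have hbot : (⊥ : StarSubalgebra ℂ D).toNonUnitalStarSubalgebra ≤ C 0 := fun a ha => by
    obtain ⟨c, rfl⟩ := StarSubalgebra.mem_bot.mp ha
    simpa only [Algebra.algebraMap_eq_smul_one] using SMulMemClass.smul_mem c hone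
  obtain ⟨s₁, -⟩ := exists_next hf hS hbot s₀
  choose next hlevel hlift hrecover using fun (k : ℕ) (s : Stage (C k) S f) =>
    exists_next hf hS (hC k.le_succ) s
  exact ⟨fun k => Nat.rec s₁ next k, strictMono_nat_of_lt_succ fun k => hlevel k _,
    fun k => hlift k _, fun k => hrecover k _⟩

end Stage

end Frame

theorem exists_contraction_eq_of_dense_iUnion {𝕜 V W : Type*} [NormedField 𝕜]
    [NormedAddCommGroup V] [NormedSpace 𝕜 V] [NormedAddCommGroup W] [NormedSpace 𝕜 W]
    [CompleteSpace W] {M : ℕ → Submodule 𝕜 V} (hM : Monotone M)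
    (hdense : Dense (⋃ k, (M k : Set V))) {T : ℕ → V →ₗ[𝕜] W}
    (hT : ∀ k, ∀ a ∈ M k, ‖T k a‖ ≤ ‖a‖) (hcompat : ∀ k, ∀ a ∈ M k, T (k + 1) a = T k a) :
    ∃ U : V →L[𝕜] W, (∀ k, ∀ a ∈ M k, U a = T k a) ∧ ∀ a, ‖U a‖ ≤ ‖a‖ := by
  let P (k : ℕ) : V →ₗ.[𝕜] W := ⟨M k, (T k).domRestrict (M k)⟩
  have hP : Monotone P := monotone_nat_of_le_succ fun k => ⟨hM k.le_succ, fun x y hxy => by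
    change T k x = T (k + 1) y
    rw [← hxy, hcompat k x x.2]⟩
  have hdir : DirectedOn (· ≤ ·) (Set.range P) := hP.directed_le.directedOn_range
  let Q := LinearPMap.sSup (Set.range P) hdir
  have hQ : ∀ a, a ∈ Q.domain ↔ ∃ k, a ∈ M k := fun a =>
    (LinearPMap.mem_domain_sSup_iff (Set.range_nonempty P) hdir).trans Set.exists_range_iff
  have hQT : ∀ k a (ha : a ∈ M k), Q ⟨a, (hQ a).mpr ⟨k, ha⟩⟩ = T k a := fun k a ha =>
    LinearPMap.sSup_apply hdir (Set.mem_range_self k) ⟨a, ha⟩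
  have hQnorm : ∀ a : Q.domain, ‖Q.toFun a‖ ≤ 1 * ‖Q.domain.subtype a‖ := fun a => by
    obtain ⟨k, hk⟩ := (hQ a).mp a.2
    rw [one_mul]
    exact (congrArg norm (hQT k a hk)).trans_le (hT k a hk)
  have hrange : DenseRange Q.domain.subtype := by
    refine hdense.mono fun a ha => ?_
    obtain ⟨k, hk⟩ := Set.mem_iUnion.mp ha
    exact ⟨⟨a, (hQ a).mpr ⟨k, hk⟩⟩, rfl⟩
  refine ⟨Q.toFun.extendOfNorm Q.domain.subtype, fun k a ha => ?_, fun a => ?_⟩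
  · exact (LinearMap.extendOfNorm_eq hrange ⟨1, hQnorm⟩ ⟨a, (hQ a).mpr ⟨k, ha⟩⟩).trans (hQT k a ha)
  · simpa only [one_mul] using LinearMap.norm_extendOfNorm_apply_le hrange 1 hQnorm a

/-- `V` is a retract of `W` in the category of normed spaces and linear contractions; equivalently,
`V` is isometric to the range of a contractive projection on `W`. -/
def IsContractiveRetract (V W : Type*) [NormedAddCommGroup V] [NormedSpace ℂ V]
    [NormedAddCommGroup W] [NormedSpace ℂ W] : Prop :=
  ∃ (γ : V →ₗ[ℂ] W) (δ : W →ₗ[ℂ] V),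
    (∀ a, ‖γ a‖ ≤ ‖a‖) ∧ (∀ b, ‖δ b‖ ≤ ‖b‖) ∧ ∀ a, δ (γ a) = a

theorem IsContractiveRetract.trans {V W X : Type*} [NormedAddCommGroup V] [NormedSpace ℂ V]
    [NormedAddCommGroup W] [NormedSpace ℂ W] [NormedAddCommGroup X] [NormedSpace ℂ X]
    (h : IsContractiveRetract V W) (h' : IsContractiveRetract W X) : IsContractiveRetract V X := by
  obtain ⟨γ, δ, hγ, hδ, hδγ⟩ := h
  obtain ⟨γ', δ', hγ', hδ', hδγ'⟩ := h'
  exact ⟨γ' ∘ₗ γ, δ ∘ₗ δ', fun a => (hγ' _).trans (hγ a), fun b => (hδ _).trans (hδ' b),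
    fun a => (congrArg δ (hδγ' _)).trans (hδγ a)⟩

theorem IsAFPresentation.isContractiveRetract_of_isDoublingSequence [Nontrivial D]
    {C : ℕ → NonUnitalStarSubalgebra ℂ D} (hC : IsAFPresentation D C) (hone : 1 ∈ C 0)
    {S : ℕ → NonUnitalStarSubalgebra ℂ E} (hS : Monotone S) (hSd : Dense (⋃ k, (S k : Set E)))
    {f : ℕ → E} (hf : IsDoublingSequence S f) : IsContractiveRetract D E := by
  obtain ⟨hCm, hCfd, hCd⟩ := hC
  obtain ⟨s, hlevel, hlift, hrecover⟩ := Frame.Stage.exists_sequence hf hS hCm hCfd hone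
  have hlevel_dense : Dense (⋃ k, (S (s k).level : Set E)) :=
    hSd.mono (Set.iUnion_mono fun k => hS (hlevel.le_apply (x := k)))
  obtain ⟨γ, hγ, hγn⟩ := exists_contraction_eq_of_dense_iUnion (M := fun k => (C k).toSubmodule)
    hCm hCd (fun k => (s k).isLift.norm_le) hlift
  obtain ⟨δ, hδ, hδn⟩ := exists_contraction_eq_of_dense_iUnion
    (M := fun k => (S (s k).level).toSubmodule) (hS.comp hlevel.monotone) hlevel_dense
    (fun k _ => (s k).frame.norm_recover_le) hrecover
  have hδγ : δ ∘ γ = id := by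
    refine Continuous.ext_on hCd (δ.continuous.comp γ.continuous) continuous_id fun a ha => ?_
    obtain ⟨k, hk⟩ := Set.mem_iUnion.mp ha
    change δ (γ a) = a
    rw [hγ k a hk, hδ k _ ((s k).isLift.mem a hk), (s k).isLift.recover_apply hk]
  exact ⟨γ, δ, hγn, hδn, congrFun hδγ⟩

/-! ### Reduction to the unital case -/

section Unitization

variable {A : Type*} [NonUnitalCStarAlgebra A] {B : Type*} [NonUnitalCStarAlgebra B]

theorem IsAFPresentation.prod {S : ℕ → NonUnitalStarSubalgebra ℂ A}
    {T : ℕ → NonUnitalStarSubalgebra ℂ B} (hS : IsAFPresentation A S)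
    (hT : IsAFPresentation B T) : IsAFPresentation (A × B) fun k => (S k).prod (T k) := by
  obtain ⟨hSm, hSfd, hSd⟩ := hS
  obtain ⟨hTm, hTfd, hTd⟩ := hT
  refine ⟨fun i j hij a ha => ⟨hSm hij ha.1, hTm hij ha.2⟩, fun k => ?_, ?_⟩
  · exact Module.Finite.iff_fg.mpr
      ((Module.Finite.iff_fg (N := (S k).toSubmodule).mp (hSfd k)).prod
        (Module.Finite.iff_fg (N := (T k).toSubmodule).mp (hTfd k)))
  · refine (hSd.prod hTd).mono ?_
    rintro ⟨a, b⟩ ⟨ha, hb⟩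
    obtain ⟨i, hi⟩ := Set.mem_iUnion.mp ha
    obtain ⟨j, hj⟩ := Set.mem_iUnion.mp hb
    exact Set.mem_iUnion.mpr ⟨max i j, hSm (le_max_left i j) hi, hTm (le_max_right i j) hj⟩

/-- The unitization of the subalgebra `S`, inside the unitization of the ambient algebra. -/
noncomputable def unitizedSubalgebra (S : NonUnitalStarSubalgebra ℂ A) :
    StarSubalgebra ℂ (Unitization ℂ A) :=
  (Unitization.starMap (NonUnitalStarSubalgebraClass.subtype S)).range

theorem mem_unitizedSubalgebra {S : NonUnitalStarSubalgebra ℂ A} {d : Unitization ℂ A} :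
    d ∈ unitizedSubalgebra S ↔ d.snd ∈ S := by
  refine ⟨?_, fun h => ⟨⟨d.fst, ⟨d.snd, h⟩⟩, ?_⟩⟩
  · rintro ⟨x, rfl⟩
    simp [Unitization.algebraMap_eq_inl]
  · ext <;> simp [Unitization.algebraMap_eq_inl]

theorem IsAFPresentation.unitization {S : ℕ → NonUnitalStarSubalgebra ℂ A}
    (hS : IsAFPresentation A S) : IsAFPresentation (Unitization ℂ A) fun k =>
      (unitizedSubalgebra (S k)).toNonUnitalStarSubalgebra := by
  obtain ⟨hSm, hSfd, hSd⟩ := hS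
  refine ⟨fun i j hij a ha => ?_, fun k => ?_, ?_⟩
  · exact mem_unitizedSubalgebra.mpr (hSm hij (mem_unitizedSubalgebra.mp ha))
  · have : FiniteDimensional ℂ (Unitization ℂ (S k)) :=
      (Unitization.linearEquiv ℂ ℂ (S k)).symm.finiteDimensional
    exact Module.Finite.range
      (Unitization.starMap (NonUnitalStarSubalgebraClass.subtype (S k))).toAlgHom.toLinearMap
  · let G (p : ℂ × A) : Unitization ℂ A := p.1 • 1 + (p.2 : Unitization ℂ A)
    have hG : Continuous G := (continuous_fst.smul continuous_const).add
      ((Unitization.isometry_inr (𝕜 := ℂ) (A := A)).continuous.comp continuous_snd)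
    have hGsurj : Function.Surjective G := fun d => ⟨(d.fst, d.snd), by ext <;> simp [G]⟩
    refine (hGsurj.denseRange.dense_image hG (dense_univ.prod hSd)).mono ?_
    rintro _ ⟨⟨c, a⟩, ⟨-, ha⟩, rfl⟩
    obtain ⟨k, hk⟩ := Set.mem_iUnion.mp ha
    exact Set.mem_iUnion.mpr ⟨k, mem_unitizedSubalgebra.mpr (by simpa [G] using hk)⟩

theorem norm_snd_fst_sub_snd_snd_le (d : Unitization ℂ (A × A)) :
    ‖d.snd.1 - d.snd.2‖ ≤ 2 * ‖d‖ := by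
  let π₁ := Unitization.starMap (R := ℂ) (NonUnitalStarAlgHom.fst ℂ A A)
  let π₂ := Unitization.starMap (R := ℂ) (NonUnitalStarAlgHom.snd ℂ A A)
  have hsub : ((d.snd.1 - d.snd.2 : A) : Unitization ℂ A) = π₁ d - π₂ d := by
    ext <;> simp [π₁, π₂]
  calc ‖d.snd.1 - d.snd.2‖ = ‖π₁ d - π₂ d‖ := by rw [← hsub, Unitization.norm_inr]
    _ ≤ ‖π₁ d‖ + ‖π₂ d‖ := norm_sub_le _ _
    _ ≤ ‖d‖ + ‖d‖ := add_le_add (NonUnitalStarAlgHom.norm_apply_le π₁ d)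
        (NonUnitalStarAlgHom.norm_apply_le π₂ d)
    _ = 2 * ‖d‖ := (two_mul _).symm

-- `A` is doubled because the coordinate map `d ↦ d.snd` of `Unitization ℂ A` need not be
-- contractive; in the difference of the two coordinates of `d.snd` the scalar part cancels.
theorem isContractiveRetract_unitization_prod_self (A : Type*) [NonUnitalCStarAlgebra A] :
    IsContractiveRetract A (Unitization ℂ (A × A)) := by
  let sndHom : Unitization ℂ (A × A) →ₗ[ℂ] A × A := Unitization.sndHom ℂ ℂ (A × A)
  refine ⟨Unitization.inrHom ℂ ℂ (A × A) ∘ₗ LinearMap.prod .id (-.id),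
    (1 / 2 : ℂ) • (LinearMap.fst ℂ A A - LinearMap.snd ℂ A A) ∘ₗ sndHom, ?_, ?_, ?_⟩
  · intro a
    change ‖(((a, -a) : A × A) : Unitization ℂ (A × A))‖ ≤ ‖a‖
    rw [Unitization.norm_inr, Prod.norm_def, norm_neg, max_self]
  · intro d
    change ‖(1 / 2 : ℂ) • (d.snd.1 - d.snd.2)‖ ≤ ‖d‖
    rw [norm_smul]
    norm_num
    linarith [norm_snd_fst_sub_snd_snd_le d]
  · intro a
    change (1 / 2 : ℂ) • (a - -a) = a
    module

theorem IsAFPresentation.isContractiveRetract {S : ℕ → NonUnitalStarSubalgebra ℂ A}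
    (hS : IsAFPresentation A S) {T : ℕ → NonUnitalStarSubalgebra ℂ B} (hT : IsAFPresentation B T)
    (hF : HasFermionProperty B T) : IsContractiveRetract A B := by
  obtain ⟨n, f, hn, hf⟩ := hF.exists_isDoublingSequence hT
  obtain ⟨hTm, -, hTd⟩ := hT
  have hdense : Dense (⋃ k, (T (n k) : Set B)) :=
    hTd.mono (Set.iUnion_mono fun k => hTm (hn.le_apply (x := k)))
  exact (isContractiveRetract_unitization_prod_self A).trans
    ((hS.prod hS).unitization.isContractiveRetract_of_isDoublingSequence
      (one_mem (unitizedSubalgebra _)) (hTm.comp hn.monotone) hdense hf)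

end Unitization

end

theorem exists_complemented_contractive_injection
    (A B : Type*) [NonUnitalCStarAlgebra A] [NonUnitalCStarAlgebra B]
    (SA : ℕ → NonUnitalStarSubalgebra ℂ A) (hSA : IsAFPresentation A SA)
    (SB : ℕ → NonUnitalStarSubalgebra ℂ B) (hSB : IsAFPresentation B SB)
    (hFermion : HasFermionProperty B SB) :
    ∃ (γ : A →ₗᵢ[ℂ] B) (δ : B →ₗ[ℂ] A),
      (∀ b : B, ‖δ b‖ ≤ ‖b‖) ∧
      (∀ a : A, δ (γ a) = a) ∧
      (∀ b : B, ‖γ (δ b)‖ ≤ ‖b‖) ∧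
      (∀ b : B, γ (δ (γ (δ b))) = γ (δ b)) ∧
      Set.range (fun b : B => γ (δ b)) = Set.range γ := by
  obtain ⟨γ, δ, hγ, hδ, hδγ⟩ := hSA.isContractiveRetract hSB hFermion
  have hγ_norm : ∀ a, ‖γ a‖ = ‖a‖ := fun a =>
    le_antisymm (hγ a) (by simpa only [hδγ] using hδ (γ a))
  refine ⟨⟨γ, hγ_norm⟩, δ, hδ, hδγ, fun b => (hγ _).trans (hδ b), fun b => congrArg γ (hδγ _), ?_⟩
  exact (Function.RightInverse.surjective (g := γ) hδγ).range_comp γ
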